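/- arXiv:2401.05829 — 2 statements merged into one kernel-verified Lean document; each statement's English description precedes it below -/
import Mathlib

section
/- Let n ≥ 2 and let u be harmonic on ℝⁿ \ B̄₁ (the exterior of the closed unit ball), continuous up to ∂B₁, and bounded below. Then the limit u_∞ := lim_{|x|→∞} u(x) exists in ℝ ∪ {+∞}; i.e., either u(x) → +∞ as |x| → ∞, or there is a real number a with u(x) → a as |x| → ∞. -/
noncomputable def lap (n : ℕ) (u : EuclideanSpace ℝ (Fin n) → ℝ)
    (x : EuclideanSpace ℝ (Fin n)) : ℝ :=
  ∑ i, fderiv ℝ (fun y => fderiv ℝ u y (EuclideanSpace.single i 1)) x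
    (EuclideanSpace.single i 1)

open MeasureTheory Metric Set

theorem hasDerivAt_max_zero_pow_three (s : ℝ) :
    HasDerivAt (fun t : ℝ => max 0 t ^ 3) (3 * max 0 s ^ 2) s := by
  rcases lt_trichotomy s 0 with hs | rfl | hs
  · rw [max_eq_left hs.le]
    have : (fun t : ℝ => max 0 t ^ 3) =ᶠ[nhds s] fun _ => (0 : ℝ) := by
      filter_upwards [Iio_mem_nhds hs] with t ht
      rw [max_eq_left (le_of_lt ht)]; norm_num
    simpa using (hasDerivAt_const s (0 : ℝ)).congr_of_eventuallyEq this
  · rw [hasDerivAt_iff_isLittleO_nhds_zero]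
    have h2 : (fun h : ℝ => h ^ 3) =o[nhds 0] fun h : ℝ => h := by
      simpa using Asymptotics.isLittleO_pow_id (𝕜 := ℝ) (n := 3) (by norm_num)
    refine Asymptotics.IsBigO.trans_isLittleO (Asymptotics.IsBigO.of_bound 1 ?_) h2
    refine Filter.Eventually.of_forall fun h => ?_
    rcases le_total h 0 with h0 | h0 <;> simp [h0]
  · rw [max_eq_right hs.le]
    have : (fun t : ℝ => max 0 t ^ 3) =ᶠ[nhds s] fun t => t ^ 3 := by
      filter_upwards [Ioi_mem_nhds hs] with t ht
      rw [max_eq_right (le_of_lt ht)]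
    simpa using (hasDerivAt_pow 3 s).congr_of_eventuallyEq this

section Kernel

variable {n : ℕ}

/-- The radial weight `(1 - ‖z‖²)₊²`, supported in the closed unit ball. -/
noncomputable def radialWeight (z : EuclideanSpace ℝ (Fin n)) : ℝ := max 0 (1 - ‖z‖ ^ 2) ^ 2

/-- A potential whose gradient at `z` is `radialWeight z • z`. -/
noncomputable def radialPotential (z : EuclideanSpace ℝ (Fin n)) : ℝ :=
  -(1 / 6) * max 0 (1 - ‖z‖ ^ 2) ^ 3

theorem radialWeight_nonneg (z : EuclideanSpace ℝ (Fin n)) : 0 ≤ radialWeight z := sq_nonneg _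

theorem radialWeight_le_one (z : EuclideanSpace ℝ (Fin n)) : radialWeight z ≤ 1 :=
  pow_le_one₀ (le_max_left _ _) (max_le zero_le_one (by nlinarith [sq_nonneg ‖z‖]))

theorem radialWeight_of_one_le {z : EuclideanSpace ℝ (Fin n)} (hz : 1 ≤ ‖z‖) :
    radialWeight z = 0 := by
  rw [radialWeight, max_eq_left (by nlinarith)]; norm_num

theorem radialPotential_of_one_le {z : EuclideanSpace ℝ (Fin n)} (hz : 1 ≤ ‖z‖) :
    radialPotential z = 0 := by
  rw [radialPotential, max_eq_left (by nlinarith)]; norm_num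

theorem continuous_radialWeight : Continuous (radialWeight (n := n)) := by
  unfold radialWeight; fun_prop

theorem continuous_radialPotential : Continuous (radialPotential (n := n)) := by
  unfold radialPotential; fun_prop

theorem hasCompactSupport_radialWeight : HasCompactSupport (radialWeight (n := n)) :=
  HasCompactSupport.intro (isCompact_closedBall (0 : EuclideanSpace ℝ (Fin n)) 1) fun z hz =>
    radialWeight_of_one_le (by simp at hz; exact hz.le)

theorem hasCompactSupport_radialPotential : HasCompactSupport (radialPotential (n := n)) :=
  HasCompactSupport.intro (isCompact_closedBall (0 : EuclideanSpace ℝ (Fin n)) 1) fun z hz =>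
    radialPotential_of_one_le (by simp at hz; exact hz.le)

theorem integral_radialWeight_pos : 0 < ∫ z : EuclideanSpace ℝ (Fin n), radialWeight z :=
  continuous_radialWeight.integral_pos_of_hasCompactSupport_nonneg_nonzero
    hasCompactSupport_radialWeight radialWeight_nonneg (x := 0) (by simp [radialWeight])

theorem hasFDerivAt_radialPotential (z : EuclideanSpace ℝ (Fin n)) :
    HasFDerivAt radialPotential (radialWeight z • innerSL ℝ z) z := by
  have h1 : HasFDerivAt (fun y : EuclideanSpace ℝ (Fin n) => 1 - ‖y‖ ^ 2)
      (-(2 • innerSL ℝ z)) z := (hasStrictFDerivAt_norm_sq z).hasFDerivAt.const_sub 1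
  have h2 := ((hasDerivAt_max_zero_pow_three (1 - ‖z‖ ^ 2)).comp_hasFDerivAt z h1).const_mul
    (-(1 / 6 : ℝ))
  refine h2.congr_fderiv ?_
  ext y
  simp [radialWeight]
  ring

theorem fderiv_radialPotential_single (z : EuclideanSpace ℝ (Fin n)) (i : Fin n) :
    fderiv ℝ radialPotential z (EuclideanSpace.single i 1) = radialWeight z * z i := by
  rw [(hasFDerivAt_radialPotential z).fderiv]
  simp [EuclideanSpace.inner_single_right]

end Kernel

section MeanValue

variable {n : ℕ} {V : EuclideanSpace ℝ (Fin n) → ℝ}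

theorem hasDerivAt_integral_radialWeight (hV : ContDiff ℝ 2 V) (hs : HasCompactSupport V)
    (x : EuclideanSpace ℝ (Fin n)) (t : ℝ) :
    HasDerivAt (fun t : ℝ => ∫ z, radialWeight z * V (x + t • z))
      (∫ z, radialWeight z * fderiv ℝ V (x + t • z) z) t := by
  have hVc := hV.continuous
  have hV1 : Continuous (fderiv ℝ V) := hV.continuous_fderiv (by norm_num)
  have hw := continuous_radialWeight (n := n)
  obtain ⟨C, hC⟩ := hV1.bounded_above_of_compact_support (hs.fderiv ℝ)
  refine (hasDerivAt_integral_of_dominated_loc_of_deriv_le (s := univ)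
    (F := fun t z => radialWeight z * V (x + t • z))
    (F' := fun t z => radialWeight z * fderiv ℝ V (x + t • z) z)
    (bound := fun z => radialWeight z * C) Filter.univ_mem ?_ ?_ ?_ ?_ ?_ ?_).2
  · refine Filter.Eventually.of_forall fun s => Continuous.aestronglyMeasurable ?_
    fun_prop
  · exact Continuous.integrable_of_hasCompactSupport (by fun_prop)
      hasCompactSupport_radialWeight.mul_right
  · refine Continuous.aestronglyMeasurable ?_
    exact hw.mul ((hV1.comp (by fun_prop)).clm_apply continuous_id)
  · refine Filter.Eventually.of_forall fun z s _ => ?_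
    rw [norm_mul, Real.norm_of_nonneg (radialWeight_nonneg z)]
    rcases le_total 1 ‖z‖ with hz | hz
    · simp [radialWeight_of_one_le hz]
    · refine mul_le_mul_of_nonneg_left ?_ (radialWeight_nonneg z)
      calc _ ≤ ‖fderiv ℝ V (x + s • z)‖ * ‖z‖ := ContinuousLinearMap.le_opNorm _ _
        _ ≤ ‖fderiv ℝ V (x + s • z)‖ := mul_le_of_le_one_right (norm_nonneg _) hz
        _ ≤ C := hC _
  · exact Continuous.integrable_of_hasCompactSupport (by fun_prop)
      hasCompactSupport_radialWeight.mul_right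
  · refine Filter.Eventually.of_forall fun z s _ => ?_
    have h1 : HasDerivAt (fun s : ℝ => x + s • z) z s := by
      simpa using ((hasDerivAt_id s).smul_const z).const_add x
    exact ((hV.differentiable (by norm_num) _).hasFDerivAt.comp_hasDerivAt s h1).const_mul _

theorem integral_radialWeight_mul_fderiv (hV : ContDiff ℝ 2 V)
    (x : EuclideanSpace ℝ (Fin n)) (t : ℝ) :
    ∫ z, radialWeight z * fderiv ℝ V (x + t • z) z
      = -∫ z, radialPotential z * (t * lap n V (x + t • z)) := by
  have hV1 : ∀ i, ContDiff ℝ 1 fun y => fderiv ℝ V y (EuclideanSpace.single i 1) := fun i =>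
    (hV.fderiv_right (m := 1) (by norm_num)).clm_apply contDiff_const
  have hw := continuous_radialWeight (n := n)
  have hp := continuous_radialPotential (n := n)
  have hcomp : ∀ i z, HasFDerivAt
      (fun z => fderiv ℝ V (x + t • z) (EuclideanSpace.single i 1))
      (t • fderiv ℝ (fun y => fderiv ℝ V y (EuclideanSpace.single i 1)) (x + t • z)) z := by
    intro i z
    have h1 : HasFDerivAt (fun z : EuclideanSpace ℝ (Fin n) => x + t • z)
        (t • ContinuousLinearMap.id ℝ _) z := ((hasFDerivAt_id z).const_smul t).const_add x
    refine ((((hV1 i).differentiable (by norm_num) (x + t • z)).hasFDerivAt).comp z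
      h1).congr_fderiv ?_
    ext y; simp
  have hc1 : ∀ i, Continuous fun z => fderiv ℝ V (x + t • z) (EuclideanSpace.single i 1) :=
    fun i => (hV1 i).continuous.comp (by fun_prop)
  have hc2 : ∀ i, Continuous fun z => t * fderiv ℝ
      (fun y => fderiv ℝ V y (EuclideanSpace.single i 1)) (x + t • z)
      (EuclideanSpace.single i 1) := fun i =>
    continuous_const.mul ((((hV1 i).continuous_fderiv (by norm_num)).comp
      (g := fderiv ℝ fun y => fderiv ℝ V y (EuclideanSpace.single i 1))
      (f := fun z => x + t • z) (by fun_prop)).clm_apply continuous_const)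
  have hI1 : ∀ i, Integrable fun z : EuclideanSpace ℝ (Fin n) => (radialWeight z * z i) *
      fderiv ℝ V (x + t • z) (EuclideanSpace.single i 1) := fun i =>
    Continuous.integrable_of_hasCompactSupport
      ((hw.mul (by fun_prop)).mul (hc1 i)) hasCompactSupport_radialWeight.mul_right.mul_right
  have hI2 : ∀ i, Integrable fun z : EuclideanSpace ℝ (Fin n) => radialPotential z *
      (t * fderiv ℝ (fun y => fderiv ℝ V y (EuclideanSpace.single i 1)) (x + t • z)
      (EuclideanSpace.single i 1)) := fun i =>
    Continuous.integrable_of_hasCompactSupport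
      (hp.mul (hc2 i)) hasCompactSupport_radialPotential.mul_right
  have hparts : ∀ i, ∫ z, radialPotential z * (t * fderiv ℝ
      (fun y => fderiv ℝ V y (EuclideanSpace.single i 1)) (x + t • z)
      (EuclideanSpace.single i 1)) = -∫ z : EuclideanSpace ℝ (Fin n), (radialWeight z * z i) *
      fderiv ℝ V (x + t • z) (EuclideanSpace.single i 1) := by
    intro i
    have := integral_mul_fderiv_eq_neg_fderiv_mul_of_integrable
      (μ := (volume : Measure (EuclideanSpace ℝ (Fin n))))
      (f := radialPotential) (v := EuclideanSpace.single i 1)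
      (g := fun z => fderiv ℝ V (x + t • z) (EuclideanSpace.single i 1))
      (by simpa only [fderiv_radialPotential_single] using hI1 i)
      (by simpa [(hcomp i _).fderiv] using hI2 i)
      (Continuous.integrable_of_hasCompactSupport (hp.mul (hc1 i))
        hasCompactSupport_radialPotential.mul_right)
      (fun z _ => (hasFDerivAt_radialPotential z).differentiableAt)
      (fun z _ => (hcomp i z).differentiableAt)
    simpa [(hcomp i _).fderiv, fderiv_radialPotential_single] using this
  have hsum : ∀ z : EuclideanSpace ℝ (Fin n), radialWeight z * fderiv ℝ V (x + t • z) z =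
      ∑ i, (radialWeight z * z i) * fderiv ℝ V (x + t • z) (EuclideanSpace.single i 1) := by
    intro z
    have hz : z = ∑ i, z i • EuclideanSpace.single i (1 : ℝ) := by
      ext j; simp [Finset.sum_apply, Pi.single_apply]
    have h := congrArg (fderiv ℝ V (x + t • z)) hz
    rw [map_sum] at h
    rw [h, Finset.mul_sum]
    exact Finset.sum_congr rfl fun i _ => by rw [map_smul, smul_eq_mul, mul_assoc]
  simp_rw [hsum, lap, Finset.mul_sum]
  rw [integral_finsetSum _ fun i _ => hI1 i, integral_finsetSum _ fun i _ => hI2 i,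
    ← Finset.sum_neg_distrib]
  exact Finset.sum_congr rfl fun i _ => by rw [hparts i, neg_neg]

theorem integral_radialWeight_mul_of_lap_eq_zero (hV : ContDiff ℝ 2 V)
    (hs : HasCompactSupport V) {x : EuclideanSpace ℝ (Fin n)} {T : ℝ} (hT : 0 ≤ T)
    (hlap : ∀ y ∈ closedBall x T, lap n V y = 0) :
    ∫ z, radialWeight z * V (x + T • z) = V x * ∫ z : EuclideanSpace ℝ (Fin n), radialWeight z := by
  have hd := hasDerivAt_integral_radialWeight hV hs x
  have h0 : ∀ t ∈ Ico 0 T, ∫ z, radialWeight z * fderiv ℝ V (x + t • z) z = 0 := by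
    intro t ht
    rw [integral_radialWeight_mul_fderiv hV, neg_eq_zero]
    refine integral_eq_zero_of_ae (Filter.Eventually.of_forall fun z => ?_)
    rcases le_total 1 ‖z‖ with hz | hz
    · simp [radialPotential_of_one_le hz]
    · have : lap n V (x + t • z) = 0 := hlap _ (by
        rw [mem_closedBall, dist_eq_norm, add_sub_cancel_left, norm_smul,
          Real.norm_of_nonneg ht.1]
        nlinarith [ht.1, ht.2, norm_nonneg z])
      simp [this]
  have := constant_of_has_deriv_right_zero (a := 0) (b := T)
    (fun t _ => (hd t).continuousAt.continuousWithinAt)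
    (fun t ht => by simpa only [h0 t ht] using (hd t).hasDerivWithinAt) T ⟨hT, le_rfl⟩
  rw [this]
  simp [integral_const_mul, mul_comm]

/-- Weighted mean value property over balls. -/
theorem integrable_and_integral_radialWeight_mul {u : EuclideanSpace ℝ (Fin n) → ℝ}
    {x : EuclideanSpace ℝ (Fin n)} {T ρ : ℝ} (hT : 0 ≤ T) (hTρ : T < ρ)
    (hu : ContDiffOn ℝ 2 u (ball x ρ)) (hlap : ∀ y ∈ ball x ρ, lap n u y = 0) :
    Integrable (fun z => radialWeight z * u (x + T • z)) ∧
    ∫ z, radialWeight z * u (x + T • z) =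
      u x * ∫ z : EuclideanSpace ℝ (Fin n), radialWeight z := by
  let f : ContDiffBump x := ⟨(2 * T + ρ) / 3, (T + 2 * ρ) / 3, by linarith, by linarith⟩
  let V : EuclideanSpace ℝ (Fin n) → ℝ := fun y => f y * u y
  have hrO : (T + 2 * ρ) / 3 < ρ := by linarith
  have hV : ContDiff ℝ 2 V := by
    rw [contDiff_iff_contDiffAt]
    intro y
    by_cases hy : y ∈ ball x ρ
    · exact f.contDiff.contDiffAt.mul (hu.contDiffAt (isOpen_ball.mem_nhds hy))
    · have hy' : y ∉ tsupport f := by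
        rw [f.tsupport_eq]
        exact fun h => hy (closedBall_subset_ball hrO h)
      have hz : V =ᶠ[nhds y] fun _ => 0 := by
        filter_upwards [(isClosed_tsupport f).isOpen_compl.mem_nhds hy'] with z hz
        simp [V, image_eq_zero_of_notMem_tsupport hz]
      exact contDiffAt_const.congr_of_eventuallyEq hz
  have hs : HasCompactSupport V := f.hasCompactSupport.mul_right
  have hVu : ∀ y ∈ ball x ((2 * T + ρ) / 3), V y = u y := fun y hy => by
    simp [V, f.one_of_mem_closedBall (ball_subset_closedBall hy)]
  have hsub : closedBall x T ⊆ ball x ((2 * T + ρ) / 3) :=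
    closedBall_subset_ball (by linarith)
  have hlapV : ∀ y ∈ closedBall x T, lap n V y = 0 := by
    intro y hy
    have he : V =ᶠ[nhds y] u := by
      filter_upwards [isOpen_ball.mem_nhds (hsub hy)] with z hz using hVu z hz
    rw [← hlap y (closedBall_subset_ball hTρ hy)]
    refine Finset.sum_congr rfl fun i _ => ?_
    have he' : (fun z => fderiv ℝ V z (EuclideanSpace.single i 1)) =ᶠ[nhds y]
        fun z => fderiv ℝ u z (EuclideanSpace.single i 1) := by
      filter_upwards [he.fderiv (𝕜 := ℝ)] with z hz using by rw [hz]
    rw [he'.fderiv_eq]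
  have hfun : (fun z => radialWeight z * u (x + T • z)) =
      fun z => radialWeight z * V (x + T • z) := by
    funext z
    rcases le_total 1 ‖z‖ with hz | hz
    · simp [radialWeight_of_one_le hz]
    · rw [hVu]
      refine hsub ?_
      rw [mem_closedBall, dist_eq_norm, add_sub_cancel_left, norm_smul, Real.norm_of_nonneg hT]
      nlinarith
  have hVx : V x = u x := hVu x (mem_ball_self (by linarith))
  rw [hfun, ← hVx]
  refine ⟨?_, integral_radialWeight_mul_of_lap_eq_zero hV hs hT hlapV⟩
  have := hV.continuous
  exact Continuous.integrable_of_hasCompactSupport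
    (continuous_radialWeight.mul (by fun_prop)) hasCompactSupport_radialWeight.mul_right

end MeanValue

section Harnack

variable {n : ℕ} {u v : EuclideanSpace ℝ (Fin n) → ℝ} {U W : Set (EuclideanSpace ℝ (Fin n))}

/-- `u` is of class `C²` with vanishing Laplacian on `U`. -/
def IsHarmonicOn (u : EuclideanSpace ℝ (Fin n) → ℝ) (U : Set (EuclideanSpace ℝ (Fin n))) : Prop :=
  ContDiffOn ℝ 2 u U ∧ ∀ y ∈ U, lap n u y = 0

theorem IsHarmonicOn.mono (hu : IsHarmonicOn u U) (h : W ⊆ U) : IsHarmonicOn u W :=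
  ⟨hu.1.mono h, fun y hy => hu.2 y (h hy)⟩

theorem IsHarmonicOn.sub_const (hu : IsHarmonicOn u U) (c : ℝ) :
    IsHarmonicOn (fun y => u y - c) U :=
  ⟨hu.1.sub contDiffOn_const, fun y hy => by simpa [lap, fderiv_sub_const] using hu.2 y hy⟩

theorem IsHarmonicOn.const_sub (hu : IsHarmonicOn u U) (c : ℝ) :
    IsHarmonicOn (fun y => c - u y) U :=
  ⟨contDiffOn_const.sub hu.1, fun y hy => by
    have h := hu.2 y hy
    unfold lap at h ⊢
    simp_rw [fderiv_const_sub, neg_apply, fderiv_fun_neg,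
      neg_apply, Finset.sum_neg_distrib, h, neg_zero]⟩

/-- The constant in Harnack's inequality on balls. -/
noncomputable def harnackConst (n : ℕ) : ℝ := 3 ^ n * (81 / 25)

theorem harnackConst_nonneg (n : ℕ) : 0 ≤ harnackConst n := by
  unfold harnackConst; positivity

theorem IsHarmonicOn.le_harnackConst_mul {x y : EuclideanSpace ℝ (Fin n)} {r : ℝ} (hr : 0 < r)
    (hv : IsHarmonicOn v (ball x (4 * r))) (hpos : ∀ z ∈ ball x (4 * r), 0 ≤ v z)
    (hxy : dist y x ≤ r) : v y ≤ harnackConst n * v x := by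
  have hsub : ball y (2 * r) ⊆ ball x (4 * r) := ball_subset_ball' (by linarith)
  have hy := hv.mono hsub
  obtain ⟨-, hmy⟩ := integrable_and_integral_radialWeight_mul hr.le
    (by linarith : r < 2 * r) hy.1 hy.2
  obtain ⟨hix, hmx⟩ := integrable_and_integral_radialWeight_mul (by linarith : 0 ≤ 3 * r)
    (by linarith : 3 * r < 4 * r) hv.1 hv.2
  have hc := integral_radialWeight_pos (n := n)
  set b : EuclideanSpace ℝ (Fin n) := r⁻¹ • (x - y) with hb
  have hbn : ‖b‖ ≤ 1 := by
    rw [hb, norm_smul, norm_inv, Real.norm_of_nonneg hr.le, ← dist_eq_norm, dist_comm,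
      inv_mul_le_iff₀ hr, mul_one]
    exact hxy
  have hpt : ∀ z : EuclideanSpace ℝ (Fin n), y + r • ((3 : ℝ) • z + b) = x + (3 * r) • z := by
    intro z
    rw [hb, smul_add, smul_inv_smul₀ hr.ne', smul_smul, mul_comm r 3]
    abel
  have hvx : ∀ z : EuclideanSpace ℝ (Fin n), ‖z‖ ≤ 1 → 0 ≤ v (x + (3 * r) • z) := by
    intro z hz
    refine hpos _ ?_
    rw [mem_ball, dist_eq_norm, add_sub_cancel_left, norm_smul,
      Real.norm_of_nonneg (by linarith)]
    nlinarith
  have hvar : ∫ z, radialWeight z * v (y + r • z) =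
      3 ^ n * ∫ z : EuclideanSpace ℝ (Fin n),
        radialWeight ((3 : ℝ) • z + b) * v (x + (3 * r) • z) := by
    have h1 := Measure.integral_comp_smul (volume : Measure (EuclideanSpace ℝ (Fin n)))
      (fun z => radialWeight (z + b) * v (y + r • (z + b))) 3
    have h2 := integral_add_right_eq_self (μ := (volume : Measure (EuclideanSpace ℝ (Fin n))))
      (fun z => radialWeight z * v (y + r • z)) b
    simp only [hpt] at h1
    rw [h1, h2, finrank_euclideanSpace_fin, abs_of_pos (by positivity), smul_eq_mul,
      mul_inv_cancel_left₀ (by positivity)]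
  have hle : ∀ z : EuclideanSpace ℝ (Fin n),
      0 ≤ radialWeight ((3 : ℝ) • z + b) * v (x + (3 * r) • z) ∧
      radialWeight ((3 : ℝ) • z + b) * v (x + (3 * r) • z) ≤
        81 / 25 * (radialWeight z * v (x + (3 * r) • z)) := by
    intro z
    rcases le_total 1 ‖(3 : ℝ) • z + b‖ with hz | hz
    · rw [radialWeight_of_one_le hz, zero_mul]
      refine ⟨le_rfl, ?_⟩
      rcases le_total 1 ‖z‖ with hz1 | hz1
      · simp [radialWeight_of_one_le hz1]
      · have := mul_nonneg (radialWeight_nonneg z) (hvx z hz1)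
        linarith
    · have hz2 : ‖z‖ ≤ 2 / 3 := by
        have h1 : ‖(3 : ℝ) • z‖ ≤ ‖(3 : ℝ) • z + b‖ + ‖b‖ := by
          simpa using norm_sub_le ((3 : ℝ) • z + b) b
        rw [norm_smul] at h1
        norm_num at h1
        linarith
      have hv0 := hvx z (by linarith)
      refine ⟨mul_nonneg (radialWeight_nonneg _) hv0, ?_⟩
      rw [← mul_assoc]
      refine mul_le_mul_of_nonneg_right ((radialWeight_le_one _).trans ?_) hv0
      have h2 : (5 / 9 : ℝ) ≤ max 0 (1 - ‖z‖ ^ 2) :=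
        le_max_of_le_right (by nlinarith [norm_nonneg z])
      unfold radialWeight
      nlinarith
  have hmono := integral_mono_of_nonneg (Filter.Eventually.of_forall fun z => (hle z).1)
    (hix.const_mul (81 / 25)) (Filter.Eventually.of_forall fun z => (hle z).2)
  rw [integral_const_mul, hmx] at hmono
  rw [hvar] at hmy
  refine le_of_mul_le_mul_right ?_ hc
  rw [← hmy, harnackConst]
  have h3 : (0 : ℝ) ≤ 3 ^ n := by positivity
  calc _ ≤ _ := mul_le_mul_of_nonneg_left hmono h3
    _ = _ := by ring

theorem IsHarmonicOn.le_harnackConst_pow_mul {R₀ r : ℝ} (hr : 0 < r)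
    (hv : IsHarmonicOn v {z | R₀ < ‖z‖}) (hpos : ∀ z, R₀ < ‖z‖ → 0 ≤ v z)
    {x y : EuclideanSpace ℝ (Fin n)} {N : ℕ} (hN : 0 < N) (hxy : dist y x ≤ N * r)
    (hseg : ∀ s ∈ Icc (0 : ℝ) 1, R₀ + 4 * r ≤ ‖x + s • (y - x)‖) :
    v y ≤ harnackConst n ^ N * v x := by
  have hN' : (0 : ℝ) < N := by exact_mod_cast hN
  have key : ∀ k : ℕ, k ≤ N → v (x + ((k : ℝ) / N) • (y - x)) ≤ harnackConst n ^ k * v x := by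
    intro k
    induction k with
    | zero => intro _; simp
    | succ k ih =>
      intro hk
      have hk' : (k : ℝ) + 1 ≤ N := by exact_mod_cast hk
      have hp := hseg ((k : ℝ) / N) ⟨by positivity, by rw [div_le_one hN']; linarith⟩
      have hsub : ball (x + ((k : ℝ) / N) • (y - x)) (4 * r) ⊆ {z | R₀ < ‖z‖} := by
        intro z hz
        rw [mem_ball, dist_comm, dist_eq_norm] at hz
        have := norm_sub_norm_le (x + ((k : ℝ) / N) • (y - x)) z
        show R₀ < ‖z‖
        linarith
      have hstep : dist (x + (((k + 1 : ℕ) : ℝ) / N) • (y - x)) (x + ((k : ℝ) / N) • (y - x))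
          ≤ r := by
        rw [dist_eq_norm, add_sub_add_left_eq_sub, ← sub_smul, norm_smul, ← dist_eq_norm y x]
        have : (((k + 1 : ℕ) : ℝ) / N) - (k : ℝ) / N = 1 / N := by push_cast; ring
        rw [this, Real.norm_of_nonneg (by positivity), one_div, inv_mul_le_iff₀ hN']
        exact hxy
      calc _ ≤ _ := (hv.mono hsub).le_harnackConst_mul hr (fun z hz => hpos z (hsub hz)) hstep
        _ ≤ harnackConst n * (harnackConst n ^ k * v x) :=
          mul_le_mul_of_nonneg_left (ih (by omega)) (harnackConst_nonneg n)
        _ = _ := by ring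
  have := key N le_rfl
  rwa [div_self hN'.ne', one_smul, add_sub_cancel] at this

theorem IsHarmonicOn.le_of_inner_nonneg {R₀ R : ℝ} (hR₀ : 0 < R₀) (hR : 4 * R₀ ≤ R)
    (hv : IsHarmonicOn v {z | R₀ < ‖z‖}) (hpos : ∀ z, R₀ < ‖z‖ → 0 ≤ v z)
    {x y : EuclideanSpace ℝ (Fin n)} (hx : ‖x‖ = R) (hy : ‖y‖ = R) (hxy : 0 ≤ inner ℝ x y) :
    v y ≤ harnackConst n ^ 32 * v x := by
  refine hv.le_harnackConst_pow_mul (r := R / 16) (by linarith) hpos (by norm_num) ?_ ?_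
  · have := norm_sub_le y x
    rw [dist_eq_norm]
    push_cast
    linarith
  · intro s hs
    have h1 : x + s • (y - x) = (1 - s) • x + s • y := by
      rw [smul_sub, sub_smul, one_smul]; abel
    have h2 : ‖x + s • (y - x)‖ ^ 2 =
        (1 - s) ^ 2 * R ^ 2 + 2 * (s * (1 - s) * inner ℝ x y) + s ^ 2 * R ^ 2 := by
      rw [h1, norm_add_sq_real, norm_smul, norm_smul, hx, hy, inner_smul_left, inner_smul_right,
        mul_pow, mul_pow, Real.norm_eq_abs, Real.norm_eq_abs, sq_abs, sq_abs]
      simp only [conj_trivial]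
      ring
    have h3 : 0 ≤ s * (1 - s) * inner ℝ x y :=
      mul_nonneg (mul_nonneg hs.1 (by linarith [hs.2])) hxy
    have h4 : (R / 2) ^ 2 ≤ ‖x + s • (y - x)‖ ^ 2 := by
      nlinarith [mul_nonneg (sq_nonneg R) (sq_nonneg (2 * s - 1)), sq_nonneg R]
    have h5 := (sq_le_sq₀ (by linarith) (norm_nonneg _)).1 h4
    linarith

theorem exists_norm_eq_inner_eq_zero (hn : 2 ≤ n) (x : EuclideanSpace ℝ (Fin n)) {R : ℝ}
    (hR : 0 ≤ R) : ∃ z : EuclideanSpace ℝ (Fin n), ‖z‖ = R ∧ inner ℝ x z = 0 := by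
  have h1 := Submodule.finrank_add_finrank_orthogonal (Submodule.span ℝ {x})
  rw [finrank_euclideanSpace_fin] at h1
  have h2 := finrank_span_le_card (R := ℝ) ({x} : Set (EuclideanSpace ℝ (Fin n)))
  simp only [toFinset_singleton, Finset.card_singleton] at h2
  have h3 : (Submodule.span ℝ {x})ᗮ ≠ ⊥ := by
    intro h
    rw [h, finrank_bot] at h1
    omega
  obtain ⟨w, hw, hw0⟩ := Submodule.exists_mem_ne_zero_of_ne_bot h3
  have hw1 : ‖w‖ ≠ 0 := norm_ne_zero_iff.2 hw0
  refine ⟨(R / ‖w‖) • w, ?_, ?_⟩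
  · rw [norm_smul, Real.norm_of_nonneg (by positivity), div_mul_cancel₀ _ hw1]
  · rw [inner_smul_right, Submodule.mem_orthogonal_singleton_iff_inner_right.1 hw, mul_zero]

/-- Harnack's inequality on spheres centred at the origin. -/
theorem IsHarmonicOn.le_on_sphere (hn : 2 ≤ n) {R₀ R : ℝ} (hR₀ : 0 < R₀) (hR : 4 * R₀ ≤ R)
    (hv : IsHarmonicOn v {z | R₀ < ‖z‖}) (hpos : ∀ z, R₀ < ‖z‖ → 0 ≤ v z)
    {x y : EuclideanSpace ℝ (Fin n)} (hx : ‖x‖ = R) (hy : ‖y‖ = R) :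
    v y ≤ harnackConst n ^ 64 * v x := by
  obtain ⟨z, hz, hxz, hzy⟩ : ∃ z : EuclideanSpace ℝ (Fin n),
      ‖z‖ = R ∧ 0 ≤ inner ℝ x z ∧ 0 ≤ inner ℝ z y := by
    obtain ⟨z, hz, hxz⟩ := exists_norm_eq_inner_eq_zero hn x (by linarith : 0 ≤ R)
    rcases le_total 0 (inner ℝ z y) with h | h
    · exact ⟨z, hz, hxz.ge, h⟩
    · exact ⟨-z, by rwa [norm_neg], by rw [inner_neg_right, hxz, neg_zero],
        by rw [inner_neg_left]; linarith⟩
  calc v y ≤ harnackConst n ^ 32 * v z := hv.le_of_inner_nonneg hR₀ hR hpos hz hy hzy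
    _ ≤ harnackConst n ^ 32 * (harnackConst n ^ 32 * v x) :=
      mul_le_mul_of_nonneg_left (hv.le_of_inner_nonneg hR₀ hR hpos hx hz hxz)
        (pow_nonneg (harnackConst_nonneg n) _)
    _ = _ := by ring

/-- The maximum principle on annuli centred at the origin. -/
theorem IsHarmonicOn.le_on_annulus {R₀ a b A : ℝ} (hR₀ : 0 ≤ R₀) (ha : R₀ < a)
    (hu : IsHarmonicOn u {z | R₀ < ‖z‖}) (hA : ∀ z, ‖z‖ = a → u z ≤ A)
    (hB : ∀ z, ‖z‖ = b → u z ≤ A) {x : EuclideanSpace ℝ (Fin n)} (hax : a ≤ ‖x‖)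
    (hxb : ‖x‖ ≤ b) : u x ≤ A := by
  set S : Set (EuclideanSpace ℝ (Fin n)) := {z | a ≤ ‖z‖ ∧ ‖z‖ ≤ b} with hS
  have hSclosed : IsClosed S :=
    (isClosed_le continuous_const continuous_norm).inter
      (isClosed_le continuous_norm continuous_const)
  have hScompact : IsCompact S :=
    (isCompact_closedBall (0 : EuclideanSpace ℝ (Fin n)) b).of_isClosed_subset hSclosed
      fun z hz => by simpa using hz.2
  have hcont : ContinuousOn u S :=
    hu.1.continuousOn.mono fun z hz => lt_of_lt_of_le ha hz.1
  obtain ⟨p, hpS, hp⟩ := hScompact.exists_isMaxOn ⟨x, hax, hxb⟩ hcont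
  have hmax : ∀ z ∈ S, u z ≤ u p := fun z hz => hp hz
  obtain ⟨q, ⟨hqS, hqp⟩, hq⟩ :=
    (hScompact.of_isClosed_subset (hcont.preimage_isClosed_of_isClosed hSclosed isClosed_singleton)
      inter_subset_left : IsCompact (S ∩ u ⁻¹' {u p})).exists_isMinOn
      ⟨p, hpS, rfl⟩ continuous_norm.continuousOn
  have hqp : u q = u p := hqp
  refine (hmax x ⟨hax, hxb⟩).trans (hqp ▸ ?_)
  by_contra hlt
  have hqa : a < ‖q‖ := lt_of_le_of_ne hqS.1 fun h => hlt (hA q h.symm)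
  have hqb : ‖q‖ < b := lt_of_le_of_ne hqS.2 fun h => hlt (hB q h)
  obtain ⟨r, hr, hra, hrb⟩ : ∃ r > 0, a + 4 * r ≤ ‖q‖ ∧ ‖q‖ + 4 * r ≤ b := by
    refine ⟨min (‖q‖ - a) (b - ‖q‖) / 4, ?_, ?_, ?_⟩
    · have := lt_min (sub_pos.2 hqa) (sub_pos.2 hqb)
      linarith
    · linarith [min_le_left (‖q‖ - a) (b - ‖q‖)]
    · linarith [min_le_right (‖q‖ - a) (b - ‖q‖)]
  have hsub : ball q (4 * r) ⊆ S := by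
    intro z hz
    rw [mem_ball, dist_eq_norm] at hz
    have h1 := norm_sub_norm_le z q
    have h2 := norm_sub_norm_le q z
    rw [norm_sub_rev] at h2
    exact ⟨by linarith, by linarith⟩
  have hq0 : 0 < ‖q‖ := by linarith
  set q' := (1 - r / ‖q‖) • q with hq'
  have hdist : dist q' q = r := by
    rw [hq', dist_eq_norm, sub_smul, one_smul, sub_sub_cancel_left, norm_neg, norm_smul,
      Real.norm_of_nonneg (by positivity), div_mul_cancel₀ _ hq0.ne']
  have hnorm : ‖q'‖ = ‖q‖ - r := by
    have : r / ‖q‖ ≤ 1 := by rw [div_le_one hq0]; linarith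
    rw [hq', norm_smul, Real.norm_of_nonneg (by linarith), sub_mul, one_mul,
      div_mul_cancel₀ _ hq0.ne']
  have hq'S : q' ∈ S := hsub (by rw [mem_ball, hdist]; linarith)
  have hle := ((hu.const_sub (u p)).mono (hsub.trans fun z hz => lt_of_lt_of_le ha hz.1)
    ).le_harnackConst_mul hr (fun z hz => sub_nonneg.2 (hmax z (hsub hz))) hdist.le
  simp only [hqp, sub_self, mul_zero] at hle
  have hmin : ‖q‖ ≤ ‖q'‖ := hq ⟨hq'S, le_antisymm (hmax q' hq'S) (by linarith)⟩
  linarith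

end Harnack

/-- a harmonic function on the exterior of the closed unit ball, continuous
up to the boundary and bounded below, converges at infinity (possibly to `+∞`). -/
theorem stmt10 (n : ℕ) (hn : 2 ≤ n) (u : EuclideanSpace ℝ (Fin n) → ℝ)
    (hcont : ContinuousOn u {x : EuclideanSpace ℝ (Fin n) | 1 ≤ ‖x‖})
    (hreg : ContDiffOn ℝ 2 u {x : EuclideanSpace ℝ (Fin n) | 1 < ‖x‖})
    (hharm : ∀ x : EuclideanSpace ℝ (Fin n), 1 < ‖x‖ → lap n u x = 0)
    (m : ℝ) (hbdd : ∀ x : EuclideanSpace ℝ (Fin n), 1 ≤ ‖x‖ → m ≤ u x) :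
    Filter.Tendsto u (Filter.comap (fun x : EuclideanSpace ℝ (Fin n) => ‖x‖)
      Filter.atTop) Filter.atTop ∨
    ∃ a : ℝ, Filter.Tendsto u (Filter.comap (fun x : EuclideanSpace ℝ (Fin n) => ‖x‖)
      Filter.atTop) (nhds a) := by
  have hu : IsHarmonicOn u {z | 1 < ‖z‖} := ⟨hreg, hharm⟩
  have hev : ∀ {P : EuclideanSpace ℝ (Fin n) → Prop},
      (∀ᶠ x in Filter.comap (fun x : EuclideanSpace ℝ (Fin n) => ‖x‖) Filter.atTop, P x) ↔
        ∃ R, ∀ x, R ≤ ‖x‖ → P x := by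
    intro P
    rw [Filter.eventually_comap, Filter.eventually_atTop]
    exact ⟨fun ⟨R, h⟩ => ⟨R, fun x hx => h _ hx x rfl⟩,
      fun ⟨R, h⟩ => ⟨R, fun b hb x hx => h x (hx ▸ hb)⟩⟩
  by_cases htop : Filter.Tendsto u (Filter.comap (fun x : EuclideanSpace ℝ (Fin n) => ‖x‖)
      Filter.atTop) Filter.atTop
  · exact Or.inl htop
  right
  obtain ⟨B, hB⟩ : ∃ B, ∀ R, ∃ x, R ≤ ‖x‖ ∧ u x < B := by
    simp only [Filter.tendsto_atTop, hev] at htop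
    push Not at htop
    exact htop
  set S : Set ℝ := {c | ∃ R, ∀ x, R ≤ ‖x‖ → c ≤ u x} with hS
  have hne : S.Nonempty := ⟨m, 1, hbdd⟩
  have hbd : BddAbove S := by
    refine ⟨B, ?_⟩
    rintro c ⟨R, hc⟩
    obtain ⟨x, hx, hxB⟩ := hB R
    exact (hc x hx).trans hxB.le
  have hlow : ∀ c < sSup S, ∃ R, ∀ x, R ≤ ‖x‖ → c ≤ u x := by
    intro c hc
    obtain ⟨d, ⟨R, hd⟩, hcd⟩ := exists_lt_of_lt_csSup hne hc
    exact ⟨R, fun x hx => hcd.le.trans (hd x hx)⟩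
  have hfreq : ∀ c, sSup S < c → ∀ R, ∃ x, R ≤ ‖x‖ ∧ u x < c := by
    intro c hc R
    by_contra! h
    exact absurd (le_csSup hbd ⟨R, h⟩) (not_le.2 hc)
  refine ⟨sSup S, tendsto_order.2 ⟨fun c hc => hev.2 ?_, fun c hc => hev.2 ?_⟩⟩
  · obtain ⟨d, hcd, hd⟩ := exists_between hc
    obtain ⟨R, hR⟩ := hlow d hd
    exact ⟨R, fun x hx => hcd.trans_le (hR x hx)⟩
  set C := harnackConst n ^ 64 with hC
  have hC0 : 0 ≤ C := pow_nonneg (harnackConst_nonneg n) _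
  obtain ⟨ε, hε, hεc⟩ : ∃ ε > 0, sSup S + C * (2 * ε) < c := by
    refine ⟨(c - sSup S) / (2 * (C + 1)), div_pos (sub_pos.2 hc) (by linarith), ?_⟩
    have : C * (2 * ((c - sSup S) / (2 * (C + 1)))) = (c - sSup S) * (C / (C + 1)) := by
      field_simp
    rw [this]
    have : C / (C + 1) < 1 := by rw [div_lt_one (by linarith)]; linarith
    nlinarith
  obtain ⟨R₁, hR₁⟩ := hlow (sSup S - ε) (by linarith)
  set R₀ := max R₁ 2 with hR₀
  have hR₀1 : 2 ≤ R₀ := le_max_right _ _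
  have hv : IsHarmonicOn (fun z => u z - (sSup S - ε)) {z | R₀ < ‖z‖} :=
    (hu.mono fun z (hz : R₀ < ‖z‖) => (by linarith : (1 : ℝ) < ‖z‖)).sub_const _
  have hsphere : ∀ x, 4 * R₀ ≤ ‖x‖ → u x < sSup S + ε → ∀ y, ‖y‖ = ‖x‖ →
      u y ≤ sSup S + C * (2 * ε) := by
    intro x hx hux y hy
    have h1 := hv.le_on_sphere hn (by linarith) hx
      (fun z hz => sub_nonneg.2 (hR₁ z ((le_max_left _ _).trans hz.le))) rfl hy
    have h2 : C * (u x - (sSup S - ε)) ≤ C * (2 * ε) :=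
      mul_le_mul_of_nonneg_left (by linarith) hC0
    simp only [← hC] at h1
    linarith
  obtain ⟨p, hp, hup⟩ := hfreq (sSup S + ε) (by linarith) (4 * R₀)
  refine ⟨‖p‖, fun x hx => lt_of_le_of_lt ?_ hεc⟩
  obtain ⟨q, hq, huq⟩ := hfreq (sSup S + ε) (by linarith) ‖x‖
  exact hu.le_on_annulus zero_le_one (by linarith : 1 < ‖p‖) (hsphere p hp hup)
    (hsphere q (by linarith) huq) hx hq
end

section
/- Let n ≥ 3 and let u be harmonic on ℝⁿ \ B̄₁, continuous on ℝⁿ \ B₁, with |u(x)| ≤ |x| for all |x| ≥ 1. Then there exist an affine function P(x) = b·x + c and a constant C depending only on n such that |u(x) − P(x)| ≤ C|x|^{2−n} for all |x| ≥ 2, and |∇u(x) − b| ≤ C|x|^{1−n} for all |x| ≥ 4. -/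
open MeasureTheory Filter Topology Set Metric

variable {n : ℕ}

local notation "𝔼" => EuclideanSpace ℝ (Fin n)

/-! ### The Laplacian and Green's identity -/

lemma ContDiff.contDiff_fderiv_single {f : 𝔼 → ℝ} {m : WithTop ℕ∞} (hf : ContDiff ℝ (m + 1) f)
    (v : 𝔼) : ContDiff ℝ m fun y => fderiv ℝ f y v :=
  (hf.fderiv_right le_rfl).clm_apply contDiff_const

lemma lap_mul {f g : 𝔼 → ℝ} (hf : ContDiff ℝ 2 f) (hg : ContDiff ℝ 2 g) (x : 𝔼) :
    lap n (fun y => f y * g y) x = lap n f x * g x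
      + 2 * ∑ i, fderiv ℝ f x (EuclideanSpace.single i 1) * fderiv ℝ g x (EuclideanSpace.single i 1)
      + f x * lap n g x := by
  have hf1 : Differentiable ℝ f := hf.differentiable (by norm_num)
  have hg1 : Differentiable ℝ g := hg.differentiable (by norm_num)
  simp only [lap, Finset.sum_mul, Finset.mul_sum, ← Finset.sum_add_distrib]
  refine Finset.sum_congr rfl fun i _ => ?_
  have hf2 := (hf.contDiff_fderiv_single (m := 1) (EuclideanSpace.single i 1)).differentiable
    (by norm_num)
  have hg2 := (hg.contDiff_fderiv_single (m := 1) (EuclideanSpace.single i 1)).differentiable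
    (by norm_num)
  have h : (fun y => fderiv ℝ (fun y => f y * g y) y (EuclideanSpace.single i 1)) =
      fun y => f y * fderiv ℝ g y (EuclideanSpace.single i 1)
        + g y * fderiv ℝ f y (EuclideanSpace.single i 1) := by
    ext y
    rw [fderiv_fun_mul (hf1 y) (hg1 y)]
    simp
  rw [h, fderiv_fun_add ((hf1 x).fun_mul (hg2 x)) ((hg1 x).fun_mul (hf2 x)),
    fderiv_fun_mul (hf1 x) (hg2 x), fderiv_fun_mul (hg1 x) (hf2 x)]
  simp
  ring

lemma ContDiff.continuous_lap {f : 𝔼 → ℝ} (hf : ContDiff ℝ 2 f) : Continuous (lap n f) := by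
  unfold lap
  refine continuous_finsetSum _ fun i _ => ?_
  exact ((hf.contDiff_fderiv_single (m := 1) _).contDiff_fderiv_single (m := 0) _).continuous

/-- A product is integrable if one factor is continuous with compact support, and the other is
continuous on an open set containing this support. -/
lemma integrable_mul_of_tsupport_subset {f g : 𝔼 → ℝ} {Ω : Set 𝔼} (hΩ : IsOpen Ω)
    (hf : Continuous f) (hfc : HasCompactSupport f) (hfΩ : tsupport f ⊆ Ω)
    (hg : ContinuousOn g Ω) : Integrable (fun y => f y * g y) := by
  refine Continuous.integrable_of_hasCompactSupport ?_ hfc.mul_right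
  refine continuous_of_tsupport fun x hx => ?_
  exact hf.continuousAt.mul
    (hg.continuousAt (hΩ.mem_nhds (hfΩ (tsupport_mul_subset_left hx))))

/-- Green's second identity for a harmonic function and a compactly supported one. -/
lemma integral_lap_mul_eq_zero {w u : 𝔼 → ℝ} {Ω : Set 𝔼} (hΩ : IsOpen Ω)
    (hw : ContDiff ℝ 2 w) (hwc : HasCompactSupport w) (hwΩ : tsupport w ⊆ Ω)
    (hu : ContDiffOn ℝ 2 u Ω) (hu0 : ∀ y ∈ Ω, lap n u y = 0) :
    ∫ y, lap n w y * u y = 0 := by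
  have hu1 : ∀ v : 𝔼, ContDiffOn ℝ 1 (fun y => fderiv ℝ u y v) Ω := fun v =>
    (hu.fderiv_of_isOpen hΩ (by norm_num)).clm_apply contDiffOn_const
  have hu2 : ∀ v : 𝔼, ContinuousOn
      (fun y => fderiv ℝ (fun z => fderiv ℝ u z v) y v) Ω := fun v =>
    ((hu1 v).continuousOn_fderiv_of_isOpen hΩ le_rfl).clm_apply continuousOn_const
  have hw1 : ∀ v : 𝔼, ContDiff ℝ 1 (fun y => fderiv ℝ w y v) := fun v =>
    hw.contDiff_fderiv_single (m := 1) v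
  have hw2 : ∀ v : 𝔼, Continuous (fun y => fderiv ℝ (fun z => fderiv ℝ w z v) y v) := fun v =>
    ((hw1 v).contDiff_fderiv_single (m := 0) v).continuous
  have hs1 : ∀ v : 𝔼, tsupport (fun y => fderiv ℝ w y v) ⊆ Ω := fun v =>
    (tsupport_fderiv_apply_subset (f := w) ℝ v).trans hwΩ
  have hs2 : ∀ v : 𝔼, tsupport (fun y => fderiv ℝ (fun z => fderiv ℝ w z v) y v) ⊆ Ω := fun v =>
    (tsupport_fderiv_apply_subset ℝ v).trans (hs1 v)
  have hc1 : ∀ v : 𝔼, HasCompactSupport (fun y => fderiv ℝ w y v) := fun v =>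
    hwc.fderiv_apply ℝ v
  have hc2 : ∀ v : 𝔼, HasCompactSupport
      (fun y => fderiv ℝ (fun z => fderiv ℝ w z v) y v) := fun v => (hc1 v).fderiv_apply ℝ v
  have key : ∀ v : 𝔼, ∫ y, fderiv ℝ (fun z => fderiv ℝ w z v) y v * u y
      = ∫ y, w y * fderiv ℝ (fun z => fderiv ℝ u z v) y v := by
    intro v
    rw [integral_mul_fderiv_eq_neg_fderiv_mul_of_integrable
        (integrable_mul_of_tsupport_subset hΩ (hw1 v).continuous (hc1 v) (hs1 v)
          (hu1 v).continuousOn)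
        (integrable_mul_of_tsupport_subset hΩ hw.continuous hwc hwΩ (hu2 v))
        (integrable_mul_of_tsupport_subset hΩ hw.continuous hwc hwΩ (hu1 v).continuousOn)
        (fun x _ => hw.differentiable (by norm_num) x)
        (fun x hx => ((hu1 v).contDiffAt (hΩ.mem_nhds (hwΩ hx))).differentiableAt (by norm_num)),
      integral_mul_fderiv_eq_neg_fderiv_mul_of_integrable
        (integrable_mul_of_tsupport_subset hΩ (hw2 v) (hc2 v) (hs2 v) hu.continuousOn)
        (integrable_mul_of_tsupport_subset hΩ (hw1 v).continuous (hc1 v) (hs1 v)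
          (hu1 v).continuousOn)
        (integrable_mul_of_tsupport_subset hΩ (hw1 v).continuous (hc1 v) (hs1 v)
          hu.continuousOn)
        (fun x _ => (hw1 v).differentiable (by norm_num) x)
        (fun x hx => (hu.contDiffAt (hΩ.mem_nhds (hs1 v hx))).differentiableAt (by norm_num)),
      neg_neg]
  calc ∫ y, lap n w y * u y
      = ∑ i, ∫ y, fderiv ℝ (fun z => fderiv ℝ w z (EuclideanSpace.single i 1)) y
          (EuclideanSpace.single i 1) * u y := by
        simp only [lap, Finset.sum_mul]
        exact integral_finsetSum _ fun i _ =>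
          integrable_mul_of_tsupport_subset hΩ (hw2 _) (hc2 _) (hs2 _) hu.continuousOn
    _ = ∫ y, w y * lap n u y := by
        simp only [lap, Finset.mul_sum, key]
        exact (integral_finsetSum _ fun i _ =>
          integrable_mul_of_tsupport_subset hΩ hw.continuous hwc hwΩ (hu2 _)).symm
    _ = 0 := by
        refine integral_eq_zero_of_ae (Eventually.of_forall fun y => ?_)
        by_cases hy : y ∈ tsupport w
        · simp [hu0 y (hwΩ hy)]
        · simp [image_eq_zero_of_notMem_tsupport hy]

/-! ### The regularized fundamental solution -/

/-- The function `y ↦ (‖x - y‖² + ε) ^ p`. -/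
noncomputable def regKernel (p ε : ℝ) (x y : 𝔼) : ℝ := (‖x - y‖ ^ 2 + ε) ^ p

lemma hasFDerivAt_regKernel (p : ℝ) {ε : ℝ} (hε : 0 < ε) (x y : 𝔼) :
    HasFDerivAt (regKernel p ε x)
      ((-2 * p * regKernel (p - 1) ε x y) • innerSL ℝ (x - y)) y := by
  have h0 : HasFDerivAt (fun y : 𝔼 => ‖x - y‖ ^ 2 + ε) ((-2 : ℝ) • innerSL ℝ (x - y)) y := by
    have := (((hasFDerivAt_id y).const_sub x).norm_sq).add_const ε
    refine this.congr_fderiv ?_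
    ext v
    simp
    ring
  refine (h0.rpow_const (p := p) (Or.inl (by positivity))).congr_fderiv ?_
  rw [smul_smul, regKernel]
  congr 1
  ring

lemma contDiff_regKernel (p : ℝ) {ε : ℝ} (hε : 0 < ε) (x : 𝔼) {m : WithTop ℕ∞} :
    ContDiff ℝ m (regKernel p ε x) := by
  unfold regKernel
  refine ContDiff.rpow_const_of_ne ?_ fun y => by positivity
  exact ((contDiff_const.sub contDiff_id).norm_sq ℝ).add contDiff_const

lemma lap_regKernel {ε : ℝ} (hε : 0 < ε) (x y : 𝔼) :
    lap n (regKernel (1 - n / 2) ε x) y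
      = -(n * (n - 2) * ε * regKernel (-1 - n / 2) ε x y) := by
  have h1 : ∀ i : Fin n, (fun y : 𝔼 => fderiv ℝ (regKernel (1 - n / 2) ε x) y
      (EuclideanSpace.single i 1)) =
      fun y => ((n : ℝ) - 2) * (regKernel (-(n / 2)) ε x y * (x i - y i)) := by
    intro i
    ext y
    rw [(hasFDerivAt_regKernel _ hε x y).fderiv]
    have : (1 - (n : ℝ) / 2 - 1) = -(n / 2) := by ring
    simp [this, EuclideanSpace.inner_single_right]
    ring
  have h2 : ∀ i : Fin n, fderiv ℝ (fun y : 𝔼 => fderiv ℝ (regKernel (1 - n / 2) ε x) y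
      (EuclideanSpace.single i 1)) y (EuclideanSpace.single i 1) =
      (n - 2) * (n * regKernel (-1 - n / 2) ε x y * (x i - y i) ^ 2
        - regKernel (-(n / 2)) ε x y) := by
    intro i
    rw [h1]
    have h3 : HasFDerivAt (fun y : 𝔼 => x i - y i) (-(EuclideanSpace.proj i : 𝔼 →L[ℝ] ℝ)) y := by
      exact (EuclideanSpace.proj i : 𝔼 →L[ℝ] ℝ).hasFDerivAt.const_sub (x i)
    have h4 := ((hasFDerivAt_regKernel (-(n / 2)) hε x y).mul h3).const_mul ((n : ℝ) - 2)
    have h5 : HasFDerivAt (fun y : 𝔼 => ((n : ℝ) - 2) *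
      (regKernel (-(n / 2)) ε x y * (x i - y i))) _ y := h4
    rw [h5.fderiv]
    have : (-((n : ℝ) / 2) - 1) = -1 - n / 2 := by ring
    simp [this, EuclideanSpace.inner_single_right]
    ring
  have h3 : regKernel (-(n / 2)) ε x y
      = regKernel (-1 - n / 2) ε x y * (‖x - y‖ ^ 2 + ε) := by
    unfold regKernel
    rw [← Real.rpow_add_one (by positivity)]
    congr 1
    ring
  have h4 : ‖x - y‖ ^ 2 = ∑ i, (x i - y i) ^ 2 := by
    simp [EuclideanSpace.norm_sq_eq]
  simp only [lap, h2]
  rw [← Finset.mul_sum, Finset.sum_sub_distrib, ← Finset.mul_sum, ← h4, h3]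
  simp
  ring
/-! ### Green's representation formula -/

/-- The mass of the bump `z ↦ (‖z‖² + 1) ^ (-1 - n / 2)`. -/
noncomputable def bumpMass (n : ℕ) : ℝ :=
  ∫ z : EuclideanSpace ℝ (Fin n), regKernel (-1 - n / 2) 1 0 z

lemma integrable_regKernel_one : Integrable fun z : 𝔼 => regKernel (-1 - n / 2) 1 0 z := by
  have h := integrable_rpow_neg_one_add_norm_sq (E := 𝔼) (μ := volume) (r := n + 2) (by simp)
  refine h.congr (Eventually.of_forall fun z => ?_)
  simp only [regKernel, zero_sub, norm_neg]
  congr 1 <;> ring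

lemma bumpMass_pos (n : ℕ) : 0 < bumpMass n := by
  unfold bumpMass
  have hpos : ∀ z : EuclideanSpace ℝ (Fin n), 0 < regKernel (-1 - n / 2) 1 0 z := fun z =>
    Real.rpow_pos_of_pos (by positivity) _
  refine (integral_pos_iff_support_of_nonneg (fun z => (hpos z).le)
    integrable_regKernel_one).2 ?_
  have : Function.support (fun z : EuclideanSpace ℝ (Fin n) => regKernel (-1 - n / 2) 1 0 z)
      = univ := by
    ext z
    simpa using (hpos z).ne'
  rw [this]
  exact isOpen_univ.measure_pos _ univ_nonempty

lemma tendsto_norm_pow_mul_regKernel (a : ℝ) :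
    Tendsto (fun z : 𝔼 => ‖z‖ ^ n * (a * regKernel (-1 - n / 2) 1 0 z))
      (Bornology.cobounded 𝔼) (𝓝 0) := by
  have hlim : Tendsto (fun z : 𝔼 => |a| * ‖z‖ ^ (-2 : ℝ)) (Bornology.cobounded 𝔼) (𝓝 0) := by
    have := (tendsto_rpow_neg_atTop (y := 2) (by norm_num)).comp
      (tendsto_norm_cobounded_atTop (E := 𝔼))
    simpa using this.const_mul |a|
  refine squeeze_zero_norm' ?_ hlim
  filter_upwards [(tendsto_norm_cobounded_atTop (E := 𝔼)).eventually_gt_atTop 0] with z hz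
  have h1 : regKernel (-1 - n / 2) 1 0 z ≤ (‖z‖ ^ 2) ^ (-1 - n / 2 : ℝ) := by
    simp only [regKernel, zero_sub, norm_neg]
    refine Real.rpow_le_rpow_of_nonpos (by positivity) (by linarith) ?_
    have : (0 : ℝ) ≤ n := n.cast_nonneg
    linarith
  have h0 : 0 ≤ regKernel (-1 - n / 2) 1 0 z := Real.rpow_nonneg (by positivity) _
  have h2 : ‖z‖ ^ n * (‖z‖ ^ 2) ^ (-1 - n / 2 : ℝ) = ‖z‖ ^ (-2 : ℝ) := by
    rw [← Real.rpow_natCast, ← Real.rpow_natCast, ← Real.rpow_mul hz.le, ← Real.rpow_add hz]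
    congr 1
    push_cast
    ring
  rw [norm_mul, norm_mul, norm_pow, norm_norm, Real.norm_eq_abs, Real.norm_of_nonneg h0]
  calc ‖z‖ ^ n * (|a| * regKernel (-1 - n / 2) 1 0 z)
      ≤ ‖z‖ ^ n * (|a| * (‖z‖ ^ 2) ^ (-1 - n / 2 : ℝ)) := by gcongr
    _ = |a| * ‖z‖ ^ (-2 : ℝ) := by rw [← h2]; ring

lemma tendsto_integral_regKernel_mul {g : 𝔼 → ℝ} (hg : Integrable g) {x : 𝔼}
    (hgx : ContinuousAt g x) :
    Tendsto (fun c : ℝ => ∫ y, (c ^ 2)⁻¹ * regKernel (-1 - n / 2) (c ^ 2)⁻¹ x y * g y) atTop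
      (𝓝 (bumpMass n * g x)) := by
  have hm := bumpMass_pos n
  have h := tendsto_integral_comp_smul_smul_of_integrable' (μ := volume)
    (φ := fun z : 𝔼 => (bumpMass n)⁻¹ * regKernel (-1 - n / 2) 1 0 z)
    (fun z => mul_nonneg (by positivity) (Real.rpow_nonneg (by positivity) _))
    (by rw [integral_const_mul]; exact inv_mul_cancel₀ hm.ne')
    (by simpa using tendsto_norm_pow_mul_regKernel (n := n) (bumpMass n)⁻¹) hg hgx
  refine (h.const_mul (bumpMass n)).congr' ?_
  filter_upwards [eventually_gt_atTop 0] with c hc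
  rw [← integral_const_mul]
  refine integral_congr_ae (Eventually.of_forall fun y => ?_)
  have hk : regKernel (-1 - n / 2) 1 0 (c • (x - y))
      = (c ^ 2) ^ (-1 - n / 2 : ℝ) * regKernel (-1 - n / 2) (c ^ 2)⁻¹ x y := by
    simp only [regKernel, zero_sub, norm_neg, norm_smul]
    rw [← Real.mul_rpow (by positivity) (by positivity)]
    congr 1
    rw [Real.norm_of_nonneg hc.le]
    field_simp
  have hp : c ^ n * (c ^ 2) ^ (-1 - n / 2 : ℝ) = (c ^ 2)⁻¹ := by
    rw [← Real.rpow_natCast c n, ← Real.rpow_natCast c 2, ← Real.rpow_mul hc.le,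
      ← Real.rpow_add hc, ← Real.rpow_neg hc.le]
    congr 1
    push_cast
    ring
  simp only [finrank_euclideanSpace, Fintype.card_fin, smul_eq_mul]
  rw [hk, ← hp]
  field_simp

/-- The kernel obtained by letting the commutator of the Laplacian with multiplication by `ζ` act
on the (regularized) fundamental solution with pole `x`. -/
noncomputable def greenKernel (ε : ℝ) (ζ : 𝔼 → ℝ) (x y : 𝔼) : ℝ :=
  lap n ζ y * regKernel (1 - n / 2) ε x y
    + 2 * (n - 2) * regKernel (-(n / 2)) ε x y * fderiv ℝ ζ y (x - y)

lemma lap_mul_regKernel {ζ : 𝔼 → ℝ} (hζ : ContDiff ℝ 2 ζ) {ε : ℝ} (hε : 0 < ε) (x y : 𝔼) :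
    lap n (fun z => ζ z * regKernel (1 - n / 2) ε x z) y
      = greenKernel ε ζ x y
        - n * (n - 2) * (ε * regKernel (-1 - n / 2) ε x y * ζ y) := by
  rw [lap_mul hζ (contDiff_regKernel _ hε x), lap_regKernel hε]
  have h1 : ∀ i : Fin n, fderiv ℝ (regKernel (1 - n / 2) ε x) y (EuclideanSpace.single i 1)
      = (n - 2) * regKernel (-(n / 2)) ε x y * (x - y) i := by
    intro i
    rw [(hasFDerivAt_regKernel _ hε x y).fderiv]
    have : (1 - (n : ℝ) / 2 - 1) = -(n / 2) := by ring
    simp [this, EuclideanSpace.inner_single_right]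
    ring
  have h2 : fderiv ℝ ζ y (x - y)
      = ∑ i, (x - y) i * fderiv ℝ ζ y (EuclideanSpace.single i 1) := by
    conv_lhs => rw [← (EuclideanSpace.basisFun (Fin n) ℝ).sum_repr (x - y)]
    simp only [map_sum, map_smul, smul_eq_mul, EuclideanSpace.basisFun_repr,
      EuclideanSpace.basisFun_apply]
  simp only [h1, greenKernel, h2, Finset.mul_sum]
  rw [add_assoc, add_sub_assoc, add_right_inj, sub_eq_add_neg]
  congr 1
  · exact Finset.sum_congr rfl fun i _ => by ring
  · ring

lemma lap_eq_zero_of_fderiv_eq_zero {ζ : 𝔼 → ℝ} {y : 𝔼} (h : ∀ᶠ z in 𝓝 y, fderiv ℝ ζ z = 0) :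
    lap n ζ y = 0 := by
  refine Finset.sum_eq_zero fun i _ => ?_
  have : (fun z => fderiv ℝ ζ z (EuclideanSpace.single i 1)) =ᶠ[𝓝 y] fun _ => (0 : ℝ) := by
    filter_upwards [h] with z hz
    simp [hz]
  simp [this.fderiv_eq]

lemma greenKernel_eq_zero {ζ : 𝔼 → ℝ} {K : Set 𝔼} (hK : IsClosed K)
    (hζK : ∀ y ∉ K, fderiv ℝ ζ y = 0) (ε : ℝ) (x : 𝔼) {y : 𝔼} (hy : y ∉ K) :
    greenKernel ε ζ x y = 0 := by
  have : lap n ζ y = 0 := lap_eq_zero_of_fderiv_eq_zero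
    (by filter_upwards [hK.isOpen_compl.mem_nhds hy] with z hz using hζK z hz)
  simp [greenKernel, hζK y hy, this]

lemma continuousOn_greenKernel {ζ : 𝔼 → ℝ} (hζ : ContDiff ℝ 2 ζ) {x : 𝔼} {K : Set 𝔼}
    (hx : x ∉ K) :
    ContinuousOn (fun p : ℝ × 𝔼 => greenKernel p.1 ζ x p.2) (Ici 0 ×ˢ K) := by
  have hreg : ∀ q : ℝ, ContinuousOn (fun p : ℝ × 𝔼 => regKernel q p.1 x p.2) (Ici 0 ×ˢ K) := by
    intro q
    refine ContinuousOn.rpow_const (by fun_prop) ?_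
    rintro ⟨ε, y⟩ ⟨hε, hy⟩
    left
    have : 0 < ‖x - y‖ := norm_pos_iff.2 (sub_ne_zero.2 fun h => hx (h ▸ hy))
    have hε' : (0 : ℝ) ≤ ε := hε
    show ‖x - y‖ ^ 2 + ε ≠ 0
    positivity
  have h1 : Continuous fun p : ℝ × 𝔼 => lap n ζ p.2 := hζ.continuous_lap.comp continuous_snd
  have h2 : Continuous fun p : ℝ × 𝔼 => fderiv ℝ ζ p.2 (x - p.2) :=
    ((hζ.continuous_fderiv (by norm_num)).comp continuous_snd).clm_apply (by fun_prop)
  unfold greenKernel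
  exact (h1.continuousOn.mul (hreg _)).add ((continuousOn_const.mul (hreg _)).mul h2.continuousOn)

lemma integrable_greenKernel_mul {ζ : 𝔼 → ℝ} (hζ : ContDiff ℝ 2 ζ) {x : 𝔼} {K : Set 𝔼}
    (hK : IsCompact K) (hζK : ∀ y ∉ K, fderiv ℝ ζ y = 0) (hx : x ∉ K) {u : 𝔼 → ℝ}
    (hu : ContinuousOn u K) {ε : ℝ} (hε : 0 ≤ ε) :
    Integrable fun y => greenKernel ε ζ x y * u y := by
  have h : ContinuousOn (fun y => greenKernel ε ζ x y * u y) K :=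
    ((continuousOn_greenKernel hζ hx).comp (f := fun y => (ε, y)) (by fun_prop)
      fun y hy => ⟨hε, hy⟩).mul hu
  refine (h.integrableOn_compact hK).integrable_of_forall_notMem_eq_zero fun y hy => ?_
  simp [greenKernel_eq_zero hK.isClosed hζK ε x hy]

lemma tendsto_integral_greenKernel_mul {ζ : 𝔼 → ℝ} (hζ : ContDiff ℝ 2 ζ) {x : 𝔼} {K : Set 𝔼}
    (hK : IsCompact K) (hζK : ∀ y ∉ K, fderiv ℝ ζ y = 0) (hx : x ∉ K) {u : 𝔼 → ℝ}
    (hu : ContinuousOn u K) :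
    Tendsto (fun ε => ∫ y, greenKernel ε ζ x y * u y) (𝓝[>] 0)
      (𝓝 (∫ y, greenKernel 0 ζ x y * u y)) := by
  have hset : ∀ ε, ∫ y, greenKernel ε ζ x y * u y = ∫ y in K, greenKernel ε ζ x y * u y :=
    fun ε => (setIntegral_eq_integral_of_forall_compl_eq_zero fun y hy => by
      simp [greenKernel_eq_zero hK.isClosed hζK ε x hy]).symm
  simp only [hset]
  have hcont : ContinuousOn (fun p : ℝ × 𝔼 => greenKernel p.1 ζ x p.2 * u p.2) (Ici 0 ×ˢ K) :=
    (continuousOn_greenKernel hζ hx).mul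
      (hu.comp continuousOn_snd fun p hp => hp.2)
  obtain ⟨M, hM⟩ := (isCompact_Icc.prod hK).exists_bound_of_continuousOn
    (hcont.mono (prod_mono (show Icc (0 : ℝ) 1 ⊆ Ici 0 from Icc_subset_Ici_self) Subset.rfl))
  have hev : ∀ᶠ ε : ℝ in 𝓝[>] 0, ε ∈ Icc (0 : ℝ) 1 := by
    filter_upwards [Ioc_mem_nhdsGT (zero_lt_one' ℝ)] with ε hε using ⟨hε.1.le, hε.2⟩
  refine tendsto_integral_filter_of_dominated_convergence (fun _ => M) ?_ ?_ ?_ ?_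
  · filter_upwards [hev] with ε hε
    exact (integrable_greenKernel_mul hζ hK hζK hx hu hε.1).aestronglyMeasurable.restrict
  · filter_upwards [hev] with ε hε
    refine (ae_restrict_iff' hK.measurableSet).2 (Eventually.of_forall fun y hy => ?_)
    exact hM (ε, y) ⟨hε, hy⟩
  · exact integrableOn_const hK.measure_lt_top.ne
  · refine (ae_restrict_iff' hK.measurableSet).2 (Eventually.of_forall fun y hy => ?_)
    have h := hcont.comp (f := fun ε : ℝ => (ε, y)) (s := Ici 0) (by fun_prop)
      fun ε hε => ⟨hε, hy⟩
    exact (h 0 self_mem_Ici).mono_left (nhdsWithin_mono _ Ioi_subset_Ici_self)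

/-- Green's representation formula: a harmonic function at a point where `ζ` is locally constant
is expressed through its values on the region `K` where `ζ` varies. -/
theorem green_representation {Ω K : Set 𝔼} (hΩ : IsOpen Ω) {u ζ : 𝔼 → ℝ}
    (hu : ContDiffOn ℝ 2 u Ω) (hu0 : ∀ y ∈ Ω, lap n u y = 0)
    (hζ : ContDiff ℝ 2 ζ) (hζc : HasCompactSupport ζ) (hζΩ : tsupport ζ ⊆ Ω)
    (hK : IsCompact K) (hKΩ : K ⊆ Ω) (hζK : ∀ y ∉ K, fderiv ℝ ζ y = 0) {x : 𝔼} (hx : x ∉ K) :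
    n * (n - 2) * bumpMass n * (ζ x * u x) = ∫ y, greenKernel 0 ζ x y * u y := by
  have hζu : Continuous fun y => ζ y * u y := continuous_of_tsupport fun y hy =>
    hζ.continuous.continuousAt.mul
      (hu.continuousOn.continuousAt (hΩ.mem_nhds (hζΩ (tsupport_mul_subset_left hy))))
  have hζui : Integrable fun y => ζ y * u y := hζu.integrable_of_hasCompactSupport hζc.mul_right
  have heq : ∀ ε : ℝ, 0 < ε →
      n * (n - 2) * ∫ y, ε * regKernel (-1 - n / 2) ε x y * (ζ y * u y)
        = ∫ y, greenKernel ε ζ x y * u y := by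
    intro ε hε
    have hw : tsupport (fun y => ζ y * regKernel (1 - n / 2) ε x y) ⊆ Ω :=
      tsupport_mul_subset_left.trans hζΩ
    have h0 := integral_lap_mul_eq_zero hΩ (hζ.mul (contDiff_regKernel (1 - n / 2) hε x))
      hζc.mul_right hw hu hu0
    have hi : Integrable fun y => ε * regKernel (-1 - n / 2) ε x y * (ζ y * u y) := by
      refine Continuous.integrable_of_hasCompactSupport ?_ hζc.mul_right.mul_left
      exact (continuous_const.mul (contDiff_regKernel (m := 0) _ hε x).continuous).mul hζu
    simp only [lap_mul_regKernel hζ hε] at h0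
    rw [← integral_const_mul, ← sub_eq_zero, ← neg_eq_zero, neg_sub,
      ← integral_sub (integrable_greenKernel_mul hζ hK hζK hx (hu.continuousOn.mono hKΩ) hε.le)
        (hi.const_mul _), ← h0]
    exact integral_congr_ae (Eventually.of_forall fun y => by ring)
  have hc : Tendsto (fun c : ℝ => (c ^ 2)⁻¹) atTop (𝓝[>] 0) :=
    tendsto_inv_atTop_nhdsGT_zero.comp (tendsto_pow_atTop two_ne_zero)
  have h1 := (tendsto_integral_greenKernel_mul hζ hK hζK hx (hu.continuousOn.mono hKΩ)).comp hc
  have h2 := (tendsto_integral_regKernel_mul hζui hζu.continuousAt (x := x)).const_mul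
    ((n : ℝ) * (n - 2))
  rw [mul_assoc]
  refine tendsto_nhds_unique h2 (h1.congr' ?_)
  filter_upwards [eventually_gt_atTop 0] with c hc
  exact (heq _ (by positivity)).symm
/-! ### The cutoff function and its rescalings -/

/-- A smooth radial cutoff, equal to `1` on the ball of radius `5 / 4` and supported in the closed
ball of radius `7 / 4`. -/
noncomputable def cutoff (n : ℕ) : ContDiffBump (0 : EuclideanSpace ℝ (Fin n)) :=
  ⟨5 / 4, 7 / 4, by norm_num, by norm_num⟩

/-- The closed annulus on which `cutoff` varies. -/
def annulus (n : ℕ) : Set (EuclideanSpace ℝ (Fin n)) := {y | 5 / 4 ≤ ‖y‖ ∧ ‖y‖ ≤ 7 / 4}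

lemma isCompact_annulus : IsCompact (annulus n) := by
  refine (isCompact_closedBall (0 : 𝔼) (7 / 4)).of_isClosed_subset ?_ fun y hy => by
    simpa using hy.2
  exact (isClosed_le continuous_const continuous_norm).inter
    (isClosed_le continuous_norm continuous_const)

lemma fderiv_cutoff_eq_zero {y : 𝔼} (hy : y ∉ annulus n) : fderiv ℝ (cutoff n) y = 0 := by
  by_cases h : ‖y‖ < 5 / 4
  · have : (cutoff n : 𝔼 → ℝ) =ᶠ[𝓝 y] fun _ => 1 := by
      filter_upwards [isOpen_ball.mem_nhds (show y ∈ ball (0 : 𝔼) (5 / 4) by simpa using h)]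
        with z hz
      exact (cutoff n).one_of_mem_closedBall (ball_subset_closedBall hz)
    simp [this.fderiv_eq]
  · have h7 : 7 / 4 < ‖y‖ := by
      by_contra h7
      exact hy ⟨not_lt.1 h, not_lt.1 h7⟩
    by_contra hne
    have := support_fderiv_subset ℝ (Function.mem_support.2 hne)
    rw [(cutoff n).tsupport_eq, mem_closedBall_zero_iff] at this
    exact absurd this (not_le.2 h7)

lemma contDiff_lap {f : 𝔼 → ℝ} (hf : ContDiff ℝ 4 f) : ContDiff ℝ 2 (lap n f) := by
  unfold lap
  refine ContDiff.sum fun i _ => ?_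
  exact (hf.contDiff_fderiv_single (m := 3) _).contDiff_fderiv_single (m := 2) _

/-- Precomposition with the homothety `y ↦ (y - x₀) / r`. -/
noncomputable def rescale (f : 𝔼 → ℝ) (x₀ : 𝔼) (r : ℝ) (y : 𝔼) : ℝ := f (r⁻¹ • (y - x₀))

lemma contDiff_rescale {f : 𝔼 → ℝ} {m : WithTop ℕ∞} (hf : ContDiff ℝ m f) (x₀ : 𝔼) (r : ℝ) :
    ContDiff ℝ m (rescale f x₀ r) :=
  hf.comp ((contDiff_id.sub contDiff_const).const_smul r⁻¹)

lemma fderiv_rescale {f : 𝔼 → ℝ} (hf : Differentiable ℝ f) (x₀ : 𝔼) (r : ℝ) (y : 𝔼) :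
    fderiv ℝ (rescale f x₀ r) y = r⁻¹ • fderiv ℝ f (r⁻¹ • (y - x₀)) := by
  have h1 : HasFDerivAt (fun y : 𝔼 => r⁻¹ • (y - x₀)) (r⁻¹ • ContinuousLinearMap.id ℝ 𝔼) y :=
    ((hasFDerivAt_id y).sub_const x₀).const_smul r⁻¹
  have h2 : HasFDerivAt (rescale f x₀ r) _ y :=
    (hf (r⁻¹ • (y - x₀))).hasFDerivAt.comp y h1
  rw [h2.fderiv]
  ext v
  simp

lemma lap_rescale {f : 𝔼 → ℝ} (hf : ContDiff ℝ 2 f) (x₀ : 𝔼) (r : ℝ) (y : 𝔼) :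
    lap n (rescale f x₀ r) y = (r ^ 2)⁻¹ * lap n f (r⁻¹ • (y - x₀)) := by
  simp only [lap, Finset.mul_sum]
  refine Finset.sum_congr rfl fun i _ => ?_
  have h1 := (hf.contDiff_fderiv_single (m := 1) (EuclideanSpace.single i 1)).differentiable
    (by norm_num)
  have h : (fun y => fderiv ℝ (rescale f x₀ r) y (EuclideanSpace.single i 1)) =
      fun y => r⁻¹ * rescale (fun z => fderiv ℝ f z (EuclideanSpace.single i 1)) x₀ r y := by
    ext y
    simp [fderiv_rescale (hf.differentiable (by norm_num)), rescale]
  rw [h, fderiv_const_mul, fderiv_rescale h1]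
  · simp
    ring
  · exact (contDiff_rescale (hf.contDiff_fderiv_single (m := 1) _) x₀ r).differentiable
      (by norm_num) y

lemma regKernel_homothety (p : ℝ) (x₀ ξ η : 𝔼) {r : ℝ} (hr : 0 < r) :
    regKernel p 0 (x₀ + r • ξ) (x₀ + r • η) = (r ^ 2) ^ p * regKernel p 0 ξ η := by
  unfold regKernel
  rw [← Real.mul_rpow (by positivity) (by positivity), add_sub_add_left_eq_sub, ← smul_sub,
    norm_smul, Real.norm_of_nonneg hr.le]
  congr 1
  ring

lemma greenKernel_homothety {f : 𝔼 → ℝ} (hf : ContDiff ℝ 2 f) (x₀ ξ η : 𝔼) {r : ℝ}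
    (hr : 0 < r) :
    greenKernel 0 (rescale f x₀ r) (x₀ + r • ξ) (x₀ + r • η)
      = (r ^ n)⁻¹ * greenKernel 0 f ξ η := by
  have hη : r⁻¹ • (x₀ + r • η - x₀) = η := by
    rw [add_sub_cancel_left, inv_smul_smul₀ hr.ne']
  have h1 : (r ^ 2) ^ (-(n / 2) : ℝ) = (r ^ n)⁻¹ := by
    rw [← Real.rpow_natCast, ← Real.rpow_mul hr.le, ← Real.rpow_natCast, ← Real.rpow_neg hr.le]
    congr 1
    push_cast
    ring
  have h2 : (r ^ 2) ^ (1 - n / 2 : ℝ) = r ^ 2 * (r ^ n)⁻¹ := by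
    rw [sub_eq_add_neg, Real.rpow_add (by positivity), h1, Real.rpow_one]
  simp only [greenKernel, lap_rescale hf, fderiv_rescale (hf.differentiable (by norm_num)), hη,
    regKernel_homothety _ _ _ _ hr, h1, h2]
  rw [add_sub_add_left_eq_sub, ← smul_sub]
  simp
  field_simp

lemma integral_greenKernel_homothety {f : 𝔼 → ℝ} (hf : ContDiff ℝ 2 f) (x₀ ξ : 𝔼) {r : ℝ}
    (hr : 0 < r) (u : 𝔼 → ℝ) :
    ∫ y, greenKernel 0 (rescale f x₀ r) (x₀ + r • ξ) y * u y
      = ∫ η, greenKernel 0 f ξ η * u (x₀ + r • η) := by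
  have h := Measure.integral_comp_smul (volume : Measure 𝔼)
    (fun y => greenKernel 0 (rescale f x₀ r) (x₀ + r • ξ) (x₀ + y) * u (x₀ + y)) r
  rw [integral_add_left_eq_self
    (fun y => greenKernel 0 (rescale f x₀ r) (x₀ + r • ξ) y * u y) x₀] at h
  simp only [greenKernel_homothety hf _ _ _ hr, finrank_euclideanSpace, Fintype.card_fin,
    mul_assoc, integral_const_mul, smul_eq_mul] at h
  rw [abs_of_pos (by positivity)] at h
  exact (mul_left_cancel₀ (by positivity) h).symm

/-! ### Estimates of the kernel -/

/-- First order Taylor expansion in the first variable, uniformly in the second one. -/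
lemma exists_uniform_taylor {V W : Type*} [NormedAddCommGroup V] [NormedSpace ℝ V]
    [ProperSpace V] [NormedAddCommGroup W] [NormedSpace ℝ W] {k : V × W → ℝ}
    {U : Set (V × W)} (hU : IsOpen U)
    (hk : ContDiffOn ℝ 2 k U) {A : Set W} (hA : IsCompact A)
    (hAU : closedBall 0 1 ×ˢ A ⊆ U) :
    ∃ C : ℝ, 0 ≤ C ∧ ∃ L : W → V →L[ℝ] ℝ, ContinuousOn L A ∧
      ∀ y ∈ A, ‖L y‖ ≤ C ∧ ∀ ξ ∈ closedBall (0 : V) 1,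
        |k (ξ, y) - k (0, y) - L y ξ| ≤ C * ‖ξ‖ ^ 2 := by
  set D : V × W → V →L[ℝ] ℝ :=
    fun p => (fderiv ℝ k p).comp (ContinuousLinearMap.inl ℝ V W) with hD
  have hDU : ContDiffOn ℝ 1 D U :=
    (hk.fderiv_of_isOpen hU (by norm_num)).clm_comp contDiffOn_const
  have hcpt : IsCompact (closedBall (0 : V) 1 ×ˢ A) := (isCompact_closedBall _ _).prod hA
  obtain ⟨M₁, hM₁⟩ := hcpt.exists_bound_of_continuousOn (hDU.continuousOn.mono hAU)
  obtain ⟨M₂, hM₂⟩ := hcpt.exists_bound_of_continuousOn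
    ((hDU.continuousOn_fderiv_of_isOpen hU le_rfl).mono hAU)
  have h0 : (0 : V) ∈ closedBall (0 : V) 1 := by simp
  have hinl : ∀ (ξ : V) (y : W), HasFDerivAt (fun ξ : V => (ξ, y))
      (ContinuousLinearMap.inl ℝ V W) ξ :=
    fun ξ y => hasFDerivAt_prodMk_left ξ y
  have hnorm : ‖ContinuousLinearMap.inl ℝ V W‖ ≤ 1 :=
    ContinuousLinearMap.norm_inl_le_one ℝ V W
  refine ⟨max (max M₁ M₂) 0, le_max_right _ _, fun y => D (0, y), ?_, fun y hy => ⟨?_, ?_⟩⟩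
  · exact hDU.continuousOn.comp (by fun_prop) fun y hy => hAU ⟨h0, hy⟩
  · exact (hM₁ (0, y) ⟨h0, hy⟩).trans ((le_max_left _ _).trans (le_max_left _ _))
  · intro ξ hξ
    have hD' : ∀ w ∈ closedBall (0 : V) 1, HasFDerivAt (fun z => D (z, y))
        ((fderiv ℝ D (w, y)).comp (ContinuousLinearMap.inl ℝ V W)) w := fun w hw =>
      ((hDU.contDiffAt (hU.mem_nhds (hAU ⟨hw, hy⟩))).differentiableAt
        (by norm_num)).hasFDerivAt.comp w (hinl w y)
    have hk' : ∀ w ∈ closedBall (0 : V) 1, HasFDerivAt (fun z => k (z, y)) (D (w, y)) w :=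
      fun w hw => ((hk.contDiffAt (hU.mem_nhds (hAU ⟨hw, hy⟩))).differentiableAt
        (by norm_num)).hasFDerivAt.comp w (hinl w y)
    have hlip : ∀ z ∈ closedBall (0 : V) 1,
        ‖D (z, y) - D (0, y)‖ ≤ max (max M₁ M₂) 0 * ‖z‖ := by
      intro z hz
      have := (convex_closedBall (0 : V) 1).norm_image_sub_le_of_norm_hasFDerivWithin_le
        (f := fun z => D (z, y)) (C := max (max M₁ M₂) 0)
        (fun w hw => (hD' w hw).hasFDerivWithinAt) (fun w hw => ?_) h0 hz
      · simpa using this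
      · refine (ContinuousLinearMap.opNorm_comp_le _ _).trans ?_
        refine (mul_le_of_le_one_right (norm_nonneg _) hnorm).trans ?_
        exact (hM₂ (w, y) ⟨hw, hy⟩).trans ((le_max_right _ _).trans (le_max_left _ _))
    have hsub : closedBall (0 : V) ‖ξ‖ ⊆ closedBall 0 1 :=
      closedBall_subset_closedBall (by simpa using hξ)
    have := (convex_closedBall (0 : V) ‖ξ‖).norm_image_sub_le_of_norm_hasFDerivWithin_le'
      (f := fun z => k (z, y)) (f' := fun z => D (z, y)) (φ := D (0, y))
      (C := max (max M₁ M₂) 0 * ‖ξ‖)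
      (fun w hw => (hk' w (hsub hw)).hasFDerivWithinAt)
      (fun w hw => (hlip w (hsub hw)).trans ?_) (x := 0) (y := ξ) (by simp) (by simp)
    · rw [sub_zero, mul_assoc, ← sq] at this
      exact this
    · have : ‖w‖ ≤ ‖ξ‖ := by simpa using hw
      gcongr

lemma contDiffOn_greenKernel {f : 𝔼 → ℝ} (hf : ContDiff ℝ 4 f) :
    ContDiffOn ℝ 2 (fun p : 𝔼 × 𝔼 => greenKernel 0 f p.1 p.2) {p | p.1 ≠ p.2} := by
  have hreg : ∀ q : ℝ, ContDiffOn ℝ 2 (fun p : 𝔼 × 𝔼 => regKernel q 0 p.1 p.2)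
      {p | p.1 ≠ p.2} := by
    intro q
    refine ContDiffOn.rpow_const_of_ne ?_ fun p hp => ?_
    · exact (((contDiff_fst.sub contDiff_snd).norm_sq ℝ).add contDiff_const).contDiffOn
    · have : 0 < ‖p.1 - p.2‖ := norm_pos_iff.2 (sub_ne_zero.2 hp)
      positivity
  have h1 : ContDiff ℝ 2 fun p : 𝔼 × 𝔼 => lap n f p.2 := (contDiff_lap hf).comp contDiff_snd
  have h2 : ContDiff ℝ 2 fun p : 𝔼 × 𝔼 => fderiv ℝ f p.2 (p.1 - p.2) :=
    ((hf.fderiv_right (m := 2) (by norm_num)).comp contDiff_snd).clm_apply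
      (contDiff_fst.sub contDiff_snd)
  exact (h1.contDiffOn.mul (hreg _)).add ((contDiffOn_const.mul (hreg _)).mul h2.contDiffOn)

variable (n) in
/-- Uniform first order Taylor expansion of the Green potentials with density on the annulus. -/
lemma exists_taylor_integral_greenKernel :
    ∃ C : ℝ, 0 ≤ C ∧ ∀ (v : 𝔼 → ℝ) (M : ℝ), ContinuousOn v (annulus n) →
      (∀ η ∈ annulus n, |v η| ≤ M) →
      ∃ (a : ℝ) (ℓ : 𝔼 →L[ℝ] ℝ), ‖ℓ‖ ≤ C * M ∧
        ∀ ξ : 𝔼, ‖ξ‖ ≤ 1 →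
          |(∫ η, greenKernel 0 (cutoff n) ξ η * v η) - (a + ℓ ξ)| ≤ C * M * ‖ξ‖ ^ 2 := by
  have hne : ∀ ξ : 𝔼, ‖ξ‖ ≤ 1 → ξ ∉ annulus n := fun ξ hξ h => by
    have := h.1
    linarith
  obtain ⟨C, hC, L, hL, hCL⟩ := exists_uniform_taylor
    (isOpen_ne_fun continuous_fst continuous_snd)
    (contDiffOn_greenKernel (n := n) (cutoff n).contDiff) isCompact_annulus
    (fun p hp h => hne p.1 (by simpa using hp.1) (h ▸ hp.2))
  refine ⟨C * volume.real (annulus n), by positivity, fun v M hv hM => ?_⟩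
  have hKi : ∀ ξ : 𝔼, ‖ξ‖ ≤ 1 → IntegrableOn (fun η => greenKernel 0 (cutoff n) ξ η * v η)
      (annulus n) := fun ξ hξ => (integrable_greenKernel_mul (cutoff n).contDiff isCompact_annulus
        (fun y hy => fderiv_cutoff_eq_zero hy) (hne ξ hξ) hv le_rfl).integrableOn
  have hLi : IntegrableOn (fun η => v η • L η) (annulus n) :=
    (hv.smul hL).integrableOn_compact isCompact_annulus
  have hfin : volume (annulus n) < ⊤ := isCompact_annulus.measure_lt_top
  have hset : ∀ ξ : 𝔼, ∫ η, greenKernel 0 (cutoff n) ξ η * v η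
      = ∫ η in annulus n, greenKernel 0 (cutoff n) ξ η * v η := fun ξ =>
    (setIntegral_eq_integral_of_forall_compl_eq_zero fun y hy => by
      simp [greenKernel_eq_zero isCompact_annulus.isClosed
        (fun y hy => fderiv_cutoff_eq_zero hy) 0 ξ hy]).symm
  refine ⟨∫ η, greenKernel 0 (cutoff n) 0 η * v η, ∫ η in annulus n, v η • L η, ?_, ?_⟩
  · calc ‖∫ η in annulus n, v η • L η‖ ≤ M * C * volume.real (annulus n) := by
          refine norm_setIntegral_le_of_norm_le_const hfin fun η hη => ?_
          rw [norm_smul]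
          exact mul_le_mul (hM η hη) (hCL η hη).1 (norm_nonneg _)
            ((abs_nonneg _).trans (hM η hη))
      _ = C * volume.real (annulus n) * M := by ring
  · intro ξ hξ
    have hi : IntegrableOn (fun η => greenKernel 0 (cutoff n) ξ η * v η
        - greenKernel 0 (cutoff n) 0 η * v η) (annulus n) := (hKi ξ hξ).sub (hKi 0 (by simp))
    have hLξ : IntegrableOn (fun η => (v η • L η) ξ) (annulus n) :=
      ContinuousLinearMap.integrable_comp (ContinuousLinearMap.apply ℝ ℝ ξ) hLi
    rw [hset, hset, ContinuousLinearMap.integral_apply hLi, ← sub_sub,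
      ← integral_sub (hKi ξ hξ) (hKi 0 (by simp)),
      ← integral_sub hi hLξ]
    calc |∫ η in annulus n, greenKernel 0 (cutoff n) ξ η * v η
            - greenKernel 0 (cutoff n) 0 η * v η - (v η • L η) ξ|
        ≤ M * (C * ‖ξ‖ ^ 2) * volume.real (annulus n) := by
          rw [← Real.norm_eq_abs]
          refine norm_setIntegral_le_of_norm_le_const hfin fun η hη => ?_
          have : greenKernel 0 (cutoff n) ξ η * v η - greenKernel 0 (cutoff n) 0 η * v η
              - (v η • L η) ξ
              = v η * (greenKernel 0 (cutoff n) ξ η - greenKernel 0 (cutoff n) 0 η - L η ξ) := by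
            simp
            ring
          rw [this, norm_mul]
          exact mul_le_mul (hM η hη) ((hCL η hη).2 ξ (by simpa using hξ)) (norm_nonneg _)
            ((abs_nonneg _).trans (hM η hη))
      _ = C * volume.real (annulus n) * M * ‖ξ‖ ^ 2 := by ring

variable (n) in
/-- Decay at infinity of the Green kernel of `cutoff`. -/
lemma exists_abs_greenKernel_le (hn : 2 ≤ n) :
    ∃ C : ℝ, 0 ≤ C ∧ ∀ x y : 𝔼, 2 ≤ ‖x‖ → y ∈ annulus n →
      |greenKernel 0 (cutoff n) x y| ≤ C * ‖x‖ ^ ((2 : ℝ) - n) := by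
  have hn' : (2 : ℝ) ≤ n := by exact_mod_cast hn
  have hβ : ContDiff ℝ 2 (cutoff n) := (cutoff n).contDiff
  obtain ⟨M₁, hM₁⟩ := (isCompact_annulus (n := n)).exists_bound_of_continuousOn
    hβ.continuous_lap.continuousOn
  obtain ⟨M₂, hM₂⟩ := (isCompact_annulus (n := n)).exists_bound_of_continuousOn
    (hβ.continuous_fderiv (by norm_num)).continuousOn
  refine ⟨(|M₁| + 8 * (n - 2) * |M₂|) * (1 / 8) ^ ((2 : ℝ) - n),
    mul_nonneg (add_nonneg (abs_nonneg _) (mul_nonneg (by linarith) (abs_nonneg _)))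
      (by positivity), fun x y hx hy => ?_⟩
  set d := ‖x - y‖ with hd
  have hd8 : 1 / 8 * ‖x‖ ≤ d := by
    have h1 := norm_sub_norm_le x y
    have h2 := hy.2
    rw [hd]
    linarith
  have hd0 : 0 < d := by linarith
  have hd4 : 1 / 4 ≤ d := by linarith
  have hr1 : regKernel (1 - n / 2) 0 x y = d ^ ((2 : ℝ) - n) := by
    rw [regKernel, add_zero, ← Real.rpow_natCast, ← Real.rpow_mul (norm_nonneg _)]
    congr 1
    push_cast
    ring
  have hr2 : regKernel (-(n / 2)) 0 x y * d ≤ 4 * d ^ ((2 : ℝ) - n) := by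
    have : regKernel (-(n / 2)) 0 x y = d ^ ((2 : ℝ) - n) * (d ^ 2)⁻¹ := by
      rw [regKernel, add_zero, ← Real.rpow_natCast, ← Real.rpow_mul (norm_nonneg _),
        ← Real.rpow_neg (norm_nonneg _), ← Real.rpow_add hd0]
      congr 1
      push_cast
      ring
    rw [this, mul_assoc, mul_comm 4]
    refine mul_le_mul_of_nonneg_left ?_ (by positivity)
    rw [show (d ^ 2)⁻¹ * d = d⁻¹ by field_simp]
    exact inv_le_of_inv_le₀ (by norm_num) (by linarith)
  have hr0 : 0 ≤ regKernel (-(n / 2)) 0 x y := Real.rpow_nonneg (by positivity) _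
  have hdx : d ^ ((2 : ℝ) - n) ≤ (1 / 8) ^ ((2 : ℝ) - n) * ‖x‖ ^ ((2 : ℝ) - n) := by
    rw [← Real.mul_rpow (by norm_num) (norm_nonneg _)]
    exact Real.rpow_le_rpow_of_nonpos (by linarith) hd8 (by linarith)
  have h1 : |lap n (cutoff n) y| ≤ |M₁| := (hM₁ y hy).trans (le_abs_self _)
  have h2 : |fderiv ℝ (cutoff n) y (x - y)| ≤ |M₂| * d :=
    (ContinuousLinearMap.le_of_opNorm_le _ ((hM₂ y hy).trans (le_abs_self _)) _)
  have hn2 : (0 : ℝ) ≤ n - 2 := by linarith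
  calc |greenKernel 0 (cutoff n) x y|
      ≤ |lap n (cutoff n) y| * d ^ ((2 : ℝ) - n)
        + 2 * (n - 2) * regKernel (-(n / 2)) 0 x y * |fderiv ℝ (cutoff n) y (x - y)| := by
        rw [greenKernel, hr1]
        refine (abs_add_le _ _).trans (le_of_eq ?_)
        rw [abs_mul, abs_mul, abs_of_nonneg (by positivity : 0 ≤ d ^ ((2 : ℝ) - n)),
          abs_of_nonneg (by positivity : 0 ≤ 2 * ((n : ℝ) - 2) * regKernel (-(n / 2)) 0 x y)]
    _ ≤ |M₁| * d ^ ((2 : ℝ) - n)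
        + 2 * (n - 2) * regKernel (-(n / 2)) 0 x y * (|M₂| * d) := by gcongr
    _ = |M₁| * d ^ ((2 : ℝ) - n)
        + 2 * (n - 2) * |M₂| * (regKernel (-(n / 2)) 0 x y * d) := by ring
    _ ≤ |M₁| * d ^ ((2 : ℝ) - n) + 2 * (n - 2) * |M₂| * (4 * d ^ ((2 : ℝ) - n)) := by gcongr
    _ = (|M₁| + 8 * (n - 2) * |M₂|) * d ^ ((2 : ℝ) - n) := by ring
    _ ≤ (|M₁| + 8 * (n - 2) * |M₂|) * ((1 / 8) ^ ((2 : ℝ) - n) * ‖x‖ ^ ((2 : ℝ) - n)) := by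
        gcongr
    _ = _ := by ring
/-- The image of `annulus n` under the homothety `η ↦ x₀ + r η`. -/
def shell (x₀ : 𝔼) (r : ℝ) : Set 𝔼 := {y | 5 / 4 * r ≤ ‖y - x₀‖ ∧ ‖y - x₀‖ ≤ 7 / 4 * r}

lemma isCompact_shell (x₀ : 𝔼) (r : ℝ) : IsCompact (shell x₀ r) := by
  refine (isCompact_closedBall x₀ (7 / 4 * r)).of_isClosed_subset ?_ fun y hy => by
    simpa [dist_eq_norm] using hy.2
  have hcont : Continuous fun y : 𝔼 => ‖y - x₀‖ := by fun_prop
  exact (isClosed_le continuous_const hcont).inter (isClosed_le hcont continuous_const)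

lemma norm_inv_smul_sub (x₀ y : 𝔼) {r : ℝ} (hr : 0 < r) :
    ‖r⁻¹ • (y - x₀)‖ = ‖y - x₀‖ / r := by
  rw [norm_smul, norm_inv, Real.norm_of_nonneg hr.le]
  ring

lemma rescale_cutoff_eq_one {x₀ y : 𝔼} {r : ℝ} (hr : 0 < r) (hy : ‖y - x₀‖ ≤ 5 / 4 * r) :
    rescale (cutoff n) x₀ r y = 1 := by
  refine (cutoff n).one_of_mem_closedBall ?_
  rw [mem_closedBall_zero_iff, norm_inv_smul_sub _ _ hr]
  exact (div_le_iff₀ hr).2 hy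

lemma rescale_cutoff_eq_zero {x₀ y : 𝔼} {r : ℝ} (hr : 0 < r) (hy : 7 / 4 * r ≤ ‖y - x₀‖) :
    rescale (cutoff n) x₀ r y = 0 := by
  refine (cutoff n).zero_of_le_dist ?_
  rw [dist_zero_right, norm_inv_smul_sub _ _ hr]
  exact (le_div_iff₀ hr).2 hy

lemma tsupport_rescale_cutoff_subset (x₀ : 𝔼) {r : ℝ} (hr : 0 < r) :
    tsupport (rescale (cutoff n) x₀ r) ⊆ closedBall x₀ (7 / 4 * r) := by
  refine closure_minimal (fun y hy => ?_) isClosed_closedBall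
  rw [mem_closedBall, dist_eq_norm]
  by_contra h
  exact hy (rescale_cutoff_eq_zero hr (not_le.1 h).le)

lemma hasCompactSupport_rescale_cutoff (x₀ : 𝔼) {r : ℝ} (hr : 0 < r) :
    HasCompactSupport (rescale (cutoff n) x₀ r) :=
  (isCompact_closedBall _ _).of_isClosed_subset (isClosed_tsupport _)
    (tsupport_rescale_cutoff_subset x₀ hr)

lemma fderiv_rescale_cutoff_eq_zero {x₀ y : 𝔼} {r : ℝ} (hr : 0 < r) (hy : y ∉ shell x₀ r) :
    fderiv ℝ (rescale (cutoff n) x₀ r) y = 0 := by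
  rw [fderiv_rescale ((cutoff n).contDiff (n := 1) |>.differentiable (by norm_num)),
    fderiv_cutoff_eq_zero, smul_zero]
  intro h
  rw [annulus, mem_ofPred_eq, norm_inv_smul_sub _ _ hr, le_div_iff₀ hr, div_le_iff₀ hr] at h
  exact hy h

/-! ### Interior gradient estimate -/

variable (n) in
/-- Interior gradient estimate for harmonic functions. -/
theorem exists_norm_fderiv_le_of_harmonic (hn : 3 ≤ n) :
    ∃ C : ℝ, 0 ≤ C ∧ ∀ (u : 𝔼 → ℝ) (x₀ : 𝔼) (r M : ℝ), 0 < r →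
      ContDiffOn ℝ 2 u (ball x₀ (2 * r)) → (∀ y ∈ ball x₀ (2 * r), lap n u y = 0) →
      (∀ y ∈ ball x₀ (2 * r), |u y| ≤ M) → ‖fderiv ℝ u x₀‖ ≤ C * M / r := by
  obtain ⟨C, hC, hT⟩ := exists_taylor_integral_greenKernel n
  set c₀ : ℝ := n * (n - 2) * bumpMass n with hc₀
  have hc : 0 < c₀ := by
    have hn' : (3 : ℝ) ≤ n := by exact_mod_cast hn
    have := bumpMass_pos n
    exact mul_pos (mul_pos (by linarith) (by linarith)) this
  refine ⟨c₀⁻¹ * C, by positivity, fun u x₀ r M hr hu hu0 hM => ?_⟩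
  have hball : ∀ η ∈ annulus n, x₀ + r • η ∈ ball x₀ (2 * r) := fun η hη => by
    have := hη.2
    rw [mem_ball, dist_eq_norm, add_sub_cancel_left, norm_smul, Real.norm_of_nonneg hr.le]
    nlinarith
  obtain ⟨a, ℓ, hℓ, hexp⟩ := hT (fun η => u (x₀ + r • η)) M
    (hu.continuousOn.comp (by fun_prop) hball) fun η hη => hM _ (hball η hη)
  have hrep : ∀ ξ : 𝔼, ‖ξ‖ ≤ 1 → c₀ * u (x₀ + r • ξ)
      = ∫ η, greenKernel 0 (cutoff n) ξ η * u (x₀ + r • η) := by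
    intro ξ hξ
    have hnorm : ‖x₀ + r • ξ - x₀‖ ≤ r := by
      rw [add_sub_cancel_left, norm_smul, Real.norm_of_nonneg hr.le]
      exact mul_le_of_le_one_right hr.le hξ
    have := green_representation isOpen_ball hu hu0
      (contDiff_rescale (cutoff n).contDiff x₀ r) (hasCompactSupport_rescale_cutoff x₀ hr)
      ((tsupport_rescale_cutoff_subset x₀ hr).trans (closedBall_subset_ball (by linarith)))
      (isCompact_shell x₀ r) (fun y hy => by
        have := hy.2
        rw [mem_ball, dist_eq_norm]
        linarith)
      (fun y hy => fderiv_rescale_cutoff_eq_zero hr hy) (x := x₀ + r • ξ)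
      (fun h => by
        have := h.1
        linarith)
    rwa [rescale_cutoff_eq_one hr (by linarith), one_mul,
      integral_greenKernel_homothety (cutoff n).contDiff _ _ hr] at this
  have hO : (fun y => c₀ * u y - (a + ℓ (r⁻¹ • (y - x₀)))) =O[𝓝 x₀] fun y => ‖y - x₀‖ ^ 2 := by
    refine Asymptotics.IsBigO.of_bound (C * M * (r ^ 2)⁻¹) ?_
    filter_upwards [ball_mem_nhds x₀ hr] with y hy
    have hy' : ‖r⁻¹ • (y - x₀)‖ ≤ 1 := by
      rw [norm_inv_smul_sub _ _ hr]
      rw [mem_ball, dist_eq_norm] at hy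
      exact (div_le_one hr).2 hy.le
    have h := hexp _ hy'
    rw [← hrep _ hy', smul_inv_smul₀ hr.ne', add_sub_cancel, norm_inv_smul_sub _ _ hr] at h
    rw [Real.norm_eq_abs, norm_pow, norm_norm]
    refine h.trans (le_of_eq ?_)
    field_simp
  have hder := hO.hasFDerivAt (𝕜 := ℝ) one_lt_two
  have hlin : HasFDerivAt (fun y : 𝔼 => a + ℓ (r⁻¹ • (y - x₀))) (r⁻¹ • ℓ) x₀ := by
    have := (ℓ.hasFDerivAt.comp x₀
      (((hasFDerivAt_id x₀).sub_const x₀).const_smul r⁻¹)).const_add a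
    refine this.congr_fderiv ?_
    ext v
    simp
  have hu' : HasFDerivAt u (c₀⁻¹ • r⁻¹ • ℓ) x₀ := by
    have h := (hder.add hlin).const_mul c₀⁻¹
    rw [zero_add] at h
    refine h.congr_of_eventuallyEq (Eventually.of_forall fun y => ?_)
    simp [hc.ne']
  rw [hu'.fderiv, norm_smul, norm_smul, norm_inv, norm_inv, Real.norm_of_nonneg hc.le,
    Real.norm_of_nonneg hr.le]
  calc c₀⁻¹ * (r⁻¹ * ‖ℓ‖) ≤ c₀⁻¹ * (r⁻¹ * (C * M)) := by gcongr
    _ = c₀⁻¹ * C * M / r := by ring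

/-! ### Harmonic functions of linear growth in exterior domains -/

lemma lap_sub {f g : 𝔼 → ℝ} {x : 𝔼} (hf : ContDiffAt ℝ 2 f x) (hg : ContDiffAt ℝ 2 g x) :
    lap n (fun y => f y - g y) x = lap n f x - lap n g x := by
  simp only [lap, ← Finset.sum_sub_distrib]
  refine Finset.sum_congr rfl fun i _ => ?_
  have hd : ∀ {h : 𝔼 → ℝ}, ContDiffAt ℝ 2 h x →
      DifferentiableAt ℝ (fun y => fderiv ℝ h y (EuclideanSpace.single i 1)) x := fun hh =>
    ((hh.fderiv_right (m := 1) (by norm_num)).clm_apply contDiffAt_const).differentiableAt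
      (by norm_num)
  have h : (fun y => fderiv ℝ (fun y => f y - g y) y (EuclideanSpace.single i 1)) =ᶠ[𝓝 x]
      fun y => fderiv ℝ f y (EuclideanSpace.single i 1)
        - fderiv ℝ g y (EuclideanSpace.single i 1) := by
    filter_upwards [hf.eventually (by simp), hg.eventually (by simp)] with y hfy hgy
    rw [fderiv_fun_sub (hfy.differentiableAt (by norm_num)) (hgy.differentiableAt (by norm_num))]
    simp
  rw [h.fderiv_eq, fderiv_fun_sub (hd hf) (hd hg)]
  simp

lemma lap_affine (ℓ : 𝔼 →L[ℝ] ℝ) (c : ℝ) (x : 𝔼) : lap n (fun y => ℓ y + c) x = 0 := by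
  refine Finset.sum_eq_zero fun i _ => ?_
  simp

lemma greenKernel_sub {f g : 𝔼 → ℝ} (hf : ContDiff ℝ 2 f) (hg : ContDiff ℝ 2 g) (ε : ℝ)
    (x y : 𝔼) : greenKernel ε (fun z => f z - g z) x y
      = greenKernel ε f x y - greenKernel ε g x y := by
  rw [greenKernel, lap_sub hf.contDiffAt hg.contDiffAt,
    fderiv_fun_sub (hf.differentiable (by norm_num) y) (hg.differentiable (by norm_num) y)]
  simp only [greenKernel, _root_.sub_apply]
  ring

/-- Representation of a function harmonic outside the unit ball as the difference of a potential
generated far away and a potential generated near the unit ball. -/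
lemma exterior_representation {u : 𝔼 → ℝ} (hu : ContDiffOn ℝ 2 u {x | 1 < ‖x‖})
    (hu0 : ∀ x : 𝔼, 1 < ‖x‖ → lap n u x = 0) {R : ℝ} {x : 𝔼} (hx : 2 ≤ ‖x‖) (hxR : ‖x‖ ≤ R) :
    n * (n - 2) * bumpMass n * u x
      = (∫ η, greenKernel 0 (cutoff n) (R⁻¹ • x) η * u (R • η))
        - ∫ y, greenKernel 0 (cutoff n) x y * u y := by
  have hR : 0 < R := by linarith
  have hΩ : IsOpen {x : 𝔼 | 1 < ‖x‖} := isOpen_lt continuous_const continuous_norm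
  have hcut : rescale (cutoff n) (0 : 𝔼) 1 = cutoff n := by
    ext y
    simp [rescale]
  have hann : shell (0 : 𝔼) 1 = annulus n := by
    ext y
    simp [shell, annulus]
  have h1 : ContDiff ℝ 2 (rescale (cutoff n) (0 : 𝔼) R) := contDiff_rescale (cutoff n).contDiff 0 R
  have h2 : ContDiff ℝ 2 (cutoff n) := (cutoff n).contDiff
  set ζ : 𝔼 → ℝ := fun y => rescale (cutoff n) 0 R y - cutoff n y with hζ
  have hζc : HasCompactSupport ζ :=
    (hasCompactSupport_rescale_cutoff 0 hR).sub (cutoff n).hasCompactSupport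
  have hsupp : tsupport ζ ⊆ {x : 𝔼 | 1 < ‖x‖} := by
    have hcl : IsClosed {x : 𝔼 | 5 / 4 ≤ ‖x‖} := isClosed_le continuous_const continuous_norm
    refine (closure_minimal (fun y hy => ?_) hcl).trans fun y (hy : 5 / 4 ≤ ‖y‖) => ?_
    · by_contra h
      have h : ‖y‖ < 5 / 4 := not_le.1 h
      refine hy ?_
      rw [hζ]
      simp only
      rw [rescale_cutoff_eq_one hR (by rw [sub_zero]; nlinarith), ← hcut,
        rescale_cutoff_eq_one one_pos (by rw [sub_zero]; linarith), sub_self]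
    · exact lt_of_lt_of_le (by norm_num) hy
  have hKR : shell (0 : 𝔼) R ⊆ {x : 𝔼 | 1 < ‖x‖} := fun y hy => by
    have := hy.1
    rw [sub_zero] at this
    rw [mem_ofPred_eq]
    linarith
  have hK1 : annulus n ⊆ {x : 𝔼 | 1 < ‖x‖} := fun y hy => by
    have := hy.1
    rw [mem_ofPred_eq]
    linarith
  have hxR' : x ∉ shell (0 : 𝔼) R := fun h => by
    have := h.1
    rw [sub_zero] at this
    linarith
  have hx1 : x ∉ annulus n := fun h => by
    have := h.2
    linarith
  have hrep := green_representation (K := shell 0 R ∪ annulus n) hΩ hu hu0 (h1.sub h2) hζc hsupp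
    ((isCompact_shell 0 R).union isCompact_annulus) (union_subset hKR hK1)
    (fun y hy => by
      rw [mem_union, not_or] at hy
      have := fderiv_fun_sub (h1.differentiable (by norm_num) y)
        (h2.differentiable (by norm_num) y)
      rw [fderiv_rescale_cutoff_eq_zero hR hy.1, fderiv_cutoff_eq_zero hy.2, sub_zero] at this
      exact this)
    (x := x) (fun h => h.elim hxR' hx1)
  have hζx : rescale (cutoff n) 0 R x - cutoff n x = 1 := by
    rw [rescale_cutoff_eq_one hR (by rw [sub_zero]; linarith), ← hcut,
      rescale_cutoff_eq_zero one_pos (by rw [sub_zero]; linarith), sub_zero]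
  have hscale := integral_greenKernel_homothety h2 0 (R⁻¹ • x) hR u
  simp only [zero_add, smul_inv_smul₀ hR.ne'] at hscale
  simp only [greenKernel_sub h1 h2, sub_mul] at hrep
  rw [integral_sub (integrable_greenKernel_mul h1 (isCompact_shell 0 R)
      (fun y hy => fderiv_rescale_cutoff_eq_zero hR hy) hxR' (hu.continuousOn.mono hKR) le_rfl)
    (integrable_greenKernel_mul h2 isCompact_annulus
      (fun y hy => fderiv_cutoff_eq_zero hy) hx1 (hu.continuousOn.mono hK1) le_rfl),
    hscale, ← sub_mul] at hrep
  rw [← hrep, hζx, one_mul]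

/-- A function outside a ball which is approximated by affine functions is affine. -/
lemma exists_affine_of_approx (hn : 0 < n) {g : 𝔼 → ℝ} {D : ℝ}
    (h : ∀ R : ℝ, 2 ≤ R → ∃ (a : ℝ) (ℓ : 𝔼 →L[ℝ] ℝ), ∀ x : 𝔼, 2 ≤ ‖x‖ → ‖x‖ ≤ R →
      |g x - (a + ℓ x)| ≤ D * ‖x‖ ^ 2 / R) :
    ∃ (a : ℝ) (ℓ : 𝔼 →L[ℝ] ℝ), ∀ x : 𝔼, 2 ≤ ‖x‖ → g x = a + ℓ x := by
  choose a ℓ haℓ using fun k : ℕ => h (k + 2) (by linarith [k.cast_nonneg (α := ℝ)])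
  have hlim : ∀ x : 𝔼, 2 ≤ ‖x‖ → Tendsto (fun k => a k + ℓ k x) atTop (𝓝 (g x)) := by
    intro x hx
    rw [tendsto_iff_norm_sub_tendsto_zero]
    have htop : Tendsto (fun k : ℕ => (k : ℝ) + 2) atTop atTop :=
      tendsto_atTop_add_const_right _ _ tendsto_natCast_atTop_atTop
    refine squeeze_zero' (Eventually.of_forall fun k => norm_nonneg _) ?_
      (htop.const_div_atTop (D * ‖x‖ ^ 2))
    filter_upwards [htop.eventually_ge_atTop ‖x‖] with k hk
    rw [norm_sub_rev]
    exact haℓ k x hx hk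
  set p : 𝔼 := EuclideanSpace.single ⟨0, hn⟩ 2 with hp
  have hpn : ‖p‖ = 2 := by simp [hp]
  have ha : Tendsto a atTop (𝓝 ((g p + g (-p)) / 2)) := by
    refine (((hlim p hpn.ge).add (hlim (-p) (by rw [norm_neg, hpn]))).div_const 2).congr
      fun k => ?_
    rw [map_neg]
    ring
  have hℓ : ∀ x : 𝔼, ∃ l, Tendsto (fun k => ℓ k x) atTop (𝓝 l) := by
    intro x
    by_cases hx : x = 0
    · exact ⟨0, by simp [hx]⟩
    have hx0 : 0 < ‖x‖ := norm_pos_iff.2 hx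
    have hy : ‖(2 / ‖x‖) • x‖ = 2 := by
      rw [norm_smul, norm_div, norm_norm, Real.norm_ofNat, div_mul_cancel₀ _ hx0.ne']
    refine ⟨_, (((hlim _ hy.ge).sub ha).const_mul (‖x‖ / 2)).congr fun k => ?_⟩
    rw [map_smul, smul_eq_mul]
    field_simp
    ring
  choose f hf using hℓ
  let L : 𝔼 →ₗ[ℝ] ℝ := linearMapOfTendsto (l := atTop) f (fun k => (ℓ k : 𝔼 →ₗ[ℝ] ℝ))
    (tendsto_pi_nhds.2 hf)
  refine ⟨(g p + g (-p)) / 2, L.toContinuousLinearMap, fun x hx => ?_⟩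
  exact tendsto_nhds_unique (hlim x hx) (ha.add (hf x))

variable (n) in
/-- A function of linear growth which is harmonic outside the unit ball differs from an affine
function by `O(‖x‖ ^ (2 - n))`. -/
theorem exists_affine_sub_le (hn : 3 ≤ n) :
    ∃ C : ℝ, 0 ≤ C ∧ ∀ u : 𝔼 → ℝ, ContDiffOn ℝ 2 u {x | 1 < ‖x‖} →
      (∀ x : 𝔼, 1 < ‖x‖ → lap n u x = 0) → (∀ x : 𝔼, 1 < ‖x‖ → |u x| ≤ ‖x‖) →
      ∃ (b : 𝔼) (c : ℝ), ∀ x : 𝔼, 2 ≤ ‖x‖ →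
        |u x - ((innerSL ℝ b) x + c)| ≤ C * ‖x‖ ^ ((2 : ℝ) - n) := by
  obtain ⟨C, hC, hT⟩ := exists_taylor_integral_greenKernel n
  obtain ⟨A, hA, hdecay⟩ := exists_abs_greenKernel_le n (by linarith)
  set c₀ : ℝ := n * (n - 2) * bumpMass n with hc₀
  have hc : 0 < c₀ := by
    have hn' : (3 : ℝ) ≤ n := by exact_mod_cast hn
    have := bumpMass_pos n
    exact mul_pos (mul_pos (by linarith) (by linarith)) this
  refine ⟨c₀⁻¹ * (A * 2 * volume.real (annulus n)), by positivity, fun u hu hu0 hle => ?_⟩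
  set T : 𝔼 → ℝ := fun x => ∫ y, greenKernel 0 (cutoff n) x y * u y with hTdef
  have hann : ∀ R : ℝ, 1 ≤ R → ∀ η ∈ annulus n, 1 < ‖R • η‖ ∧ ‖R • η‖ ≤ 2 * R := by
    intro R hR η hη
    have h1 := hη.1
    have h2 := hη.2
    rw [norm_smul, Real.norm_of_nonneg (by linarith)]
    constructor <;> nlinarith
  obtain ⟨a, ℓ, haℓ⟩ := exists_affine_of_approx (g := fun x => c₀ * u x + T x) (D := 2 * C)
    (by lia) fun R hR => by
      have hR0 : 0 < R := by linarith
      have hannR := hann R (by linarith)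
      obtain ⟨a, ℓ, -, h⟩ := hT (fun η => u (R • η)) (2 * R)
        (hu.continuousOn.comp (by fun_prop) fun η hη => (hannR η hη).1)
        fun η hη => (hle _ (hannR η hη).1).trans (hannR η hη).2
      refine ⟨a, R⁻¹ • ℓ, fun x hx hxR => ?_⟩
      have hxn : ‖R⁻¹ • x‖ = ‖x‖ / R := by
        rw [norm_smul, norm_inv, Real.norm_of_nonneg hR0.le]
        ring
      have hrep := exterior_representation hu hu0 hx hxR
      have := h (R⁻¹ • x) (by rw [hxn]; exact (div_le_one hR0).2 hxR)
      rw [hxn, map_smul] at this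
      rw [hc₀, hrep, hTdef]
      simp only [sub_add_cancel]
      refine this.trans (le_of_eq ?_)
      field_simp
  have hTle : ∀ x : 𝔼, 2 ≤ ‖x‖ →
      |T x| ≤ A * 2 * volume.real (annulus n) * ‖x‖ ^ ((2 : ℝ) - n) := by
    intro x hx
    have hset : T x = ∫ y in annulus n, greenKernel 0 (cutoff n) x y * u y :=
      (setIntegral_eq_integral_of_forall_compl_eq_zero fun y hy => by
        simp [greenKernel_eq_zero isCompact_annulus.isClosed
          (fun y hy => fderiv_cutoff_eq_zero hy) 0 x hy]).symm
    rw [hset, ← Real.norm_eq_abs]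
    refine (norm_setIntegral_le_of_norm_le_const (C := A * ‖x‖ ^ ((2 : ℝ) - n) * 2)
      isCompact_annulus.measure_lt_top fun y hy => ?_).trans (le_of_eq (by ring))
    have h1 := hann 1 le_rfl y hy
    rw [one_smul, mul_one] at h1
    rw [norm_mul]
    exact mul_le_mul (hdecay x y hx hy) ((hle y h1.1).trans h1.2) (norm_nonneg _) (by positivity)
  refine ⟨(InnerProductSpace.toDual ℝ 𝔼).symm (c₀⁻¹ • ℓ), c₀⁻¹ * a, fun x hx => ?_⟩
  have hx' : u x - ((innerSL ℝ ((InnerProductSpace.toDual ℝ 𝔼).symm (c₀⁻¹ • ℓ))) x + c₀⁻¹ * a)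
      = -(c₀⁻¹ * T x) := by
    have := haℓ x hx
    rw [innerSL_apply_apply, InnerProductSpace.toDual_symm_apply, _root_.smul_apply, smul_eq_mul]
    field_simp
    linarith
  rw [hx', abs_neg, abs_mul, abs_of_pos (inv_pos.2 hc), mul_assoc]
  exact mul_le_mul_of_nonneg_left (hTle x hx) (by positivity)

/-- a harmonic function of linear growth in an exterior domain is
asymptotic to an affine function `P(x) = b·x + c` with rate `|x|^{2−n}`, and its gradient
converges to `b` with rate `|x|^{1−n}`; the constant `C` depends only on `n`. -/
theorem stmt17 (n : ℕ) (hn : 3 ≤ n) :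
    ∃ C : ℝ, 0 < C ∧
      ∀ u : EuclideanSpace ℝ (Fin n) → ℝ,
        ContinuousOn u {x : EuclideanSpace ℝ (Fin n) | 1 ≤ ‖x‖} →
        ContDiffOn ℝ 2 u {x : EuclideanSpace ℝ (Fin n) | 1 < ‖x‖} →
        (∀ x : EuclideanSpace ℝ (Fin n), 1 < ‖x‖ → lap n u x = 0) →
        (∀ x : EuclideanSpace ℝ (Fin n), 1 ≤ ‖x‖ → |u x| ≤ ‖x‖) →
        ∃ (b : EuclideanSpace ℝ (Fin n)) (c : ℝ),
          (∀ x : EuclideanSpace ℝ (Fin n), 2 ≤ ‖x‖ →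
            |u x - ((innerSL ℝ b) x + c)| ≤ C * ‖x‖ ^ ((2 : ℝ) - n)) ∧
          (∀ x : EuclideanSpace ℝ (Fin n), 4 ≤ ‖x‖ →
            ‖fderiv ℝ u x - innerSL ℝ b‖ ≤ C * ‖x‖ ^ ((1 : ℝ) - n)) := by
  have hn' : (3 : ℝ) ≤ n := by exact_mod_cast hn
  obtain ⟨C₁, hC₁, haff⟩ := exists_affine_sub_le n hn
  obtain ⟨C₂, hC₂, hgrad⟩ := exists_norm_fderiv_le_of_harmonic n hn
  set C₃ : ℝ := C₂ * (C₁ * (1 / 2) ^ ((2 : ℝ) - n)) * 4 with hC₃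
  have hC₃0 : 0 ≤ C₃ := by positivity
  refine ⟨C₁ + C₃ + 1, by positivity, fun u _ hu hu0 hle => ?_⟩
  obtain ⟨b, c, hbc⟩ := haff u hu hu0 fun x hx => hle x hx.le
  refine ⟨b, c, fun x hx => (hbc x hx).trans ?_, fun x hx => ?_⟩
  · gcongr
    linarith
  have hΩ : IsOpen {x : EuclideanSpace ℝ (Fin n) | 1 < ‖x‖} :=
    isOpen_lt continuous_const continuous_norm
  have hx0 : 0 < ‖x‖ := by linarith
  have hfar : ∀ y ∈ ball x (2 * (‖x‖ / 4)), 1 / 2 * ‖x‖ ≤ ‖y‖ := fun y hy => by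
    rw [mem_ball, dist_eq_norm, norm_sub_rev] at hy
    have := norm_sub_norm_le x y
    linarith
  have hsub : ball x (2 * (‖x‖ / 4)) ⊆ {x : EuclideanSpace ℝ (Fin n) | 1 < ‖x‖} := fun y hy => by
    have := hfar y hy
    rw [mem_ofPred_eq]
    linarith
  have hP : ContDiff ℝ 2 fun y => (innerSL ℝ b) y + c :=
    (innerSL ℝ b).contDiff.add contDiff_const
  have h := hgrad (fun y => u y - ((innerSL ℝ b) y + c)) x (‖x‖ / 4)
    (C₁ * ((1 / 2) ^ ((2 : ℝ) - n) * ‖x‖ ^ ((2 : ℝ) - n))) (by positivity)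
    ((hu.mono hsub).sub hP.contDiffOn)
    (fun y hy => by
      rw [lap_sub (hu.contDiffAt (hΩ.mem_nhds (hsub hy))) hP.contDiffAt, lap_affine,
        hu0 y (hsub hy), sub_zero])
    (fun y hy => by
      have hy' := hfar y hy
      refine (hbc y (by linarith)).trans ?_
      rw [← Real.mul_rpow (by norm_num) hx0.le]
      exact mul_le_mul_of_nonneg_left
        (Real.rpow_le_rpow_of_nonpos (by positivity) hy' (by linarith)) hC₁)
  have hux : DifferentiableAt ℝ u x :=
    (hu.contDiffAt (hΩ.mem_nhds (hsub (mem_ball_self (by positivity))))).differentiableAt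
      (by norm_num)
  rw [fderiv_fun_sub hux (hP.differentiable (by norm_num) x),
    ((innerSL ℝ b).hasFDerivAt.add_const c).fderiv] at h
  have hpow : ‖x‖ ^ ((2 : ℝ) - n) / ‖x‖ = ‖x‖ ^ ((1 : ℝ) - n) := by
    rw [← Real.rpow_sub_one hx0.ne']
    ring_nf
  calc ‖fderiv ℝ u x - innerSL ℝ b‖ ≤ _ := h
    _ = C₃ * (‖x‖ ^ ((2 : ℝ) - n) / ‖x‖) := by
      rw [hC₃]
      field_simp
    _ = C₃ * ‖x‖ ^ ((1 : ℝ) - n) := by rw [hpow]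
    _ ≤ (C₁ + C₃ + 1) * ‖x‖ ^ ((1 : ℝ) - n) := by
      gcongr
      linarith
end
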